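/- arXiv:2111.11694 — 2 statements merged into one kernel-verified Lean document; each statement's English description precedes it below -/
import Mathlib

section
/- Let m ≥ 1 and g : [0,1]^m → ℝ. (1) If g has finite Hardy–Krause variation anchored at 0, is coordinate-wise right-continuous on [0,1]^m, and is coordinate-wise left-continuous at every point x ∈ [0,1]^m with some coordinate equal to 1, in each coordinate j with x_j = 1, then there exists a unique finite signed Borel measure ν concentrated on [0,1)^m such that g(x) = ν([0,x] ∩ [0,1)^m) for every x ∈ [0,1]^m. (2) Conversely, if g(x) = ν([0,x] ∩ [0,1)^m) for every x ∈ [0,1]^m for some finite signed Borel measure ν concentrated on [0,1)^m, then g has finite Hardy–Krause variation anchored at 0 and |ν|([0,1)^m \ {0}) = V_HK0(g), where |ν| is the total variation measure and 0 the all-zeros point. -/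
open Finset MeasureTheory
open scoped ENNReal

/-- The quasi-volume `Δ(g; [u,v])` of `g` on the axis-aligned rectangle `[u,v]`. -/
noncomputable def qvol {ι : Type*} [Fintype ι] [DecidableEq ι]
    (g : (ι → ℝ) → ℝ) (u v : ι → ℝ) : ℝ :=
  ∑ δ : ι → Bool,
    (-1 : ℝ) ^ (Finset.univ.filter fun k => δ k = true).card *
      g fun k => if δ k then u k else v k

/-- The Vitali variation of `g : [0,1]^ι → ℝ`: the supremum over all axis-aligned grid
splits of `[0,1]^ι` of the sum of the absolute quasi-volumes of the cells. -/
noncomputable def vitali {ι : Type*} [Fintype ι] [DecidableEq ι]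
    (g : (ι → ℝ) → ℝ) : ℝ≥0∞ :=
  ⨆ (N : ι → ℕ) (u : ∀ k, Fin (N k + 1) → ℝ) (_ : ∀ k, StrictMono (u k))
      (_ : ∀ k, u k 0 = 0) (_ : ∀ k, u k (Fin.last (N k)) = 1),
    ∑ l : ∀ k, Fin (N k),
      ENNReal.ofReal
        |qvol g (fun k => u k ((l k).castSucc)) fun k => u k ((l k).succ)|

/-- The Hardy–Krause variation of `g` anchored at `0`: the sum over nonempty `T ⊆ ι`
of the Vitali variations of the faces of `g` (coordinates outside `T` set to `0`). -/
noncomputable def hk0 {ι : Type*} [Fintype ι] [DecidableEq ι]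
    (g : (ι → ℝ) → ℝ) : ℝ≥0∞ :=
  ∑ T : Finset ι,
    if T.Nonempty then
      vitali fun t : {j // j ∈ T} → ℝ =>
        g fun k => if h : k ∈ T then t ⟨k, h⟩ else 0
    else 0


section A
variable {ι : Type*} [Fintype ι] [DecidableEq ι]
set_option linter.unusedSectionVars false

lemma qvol_prod (f : ι → ℝ → ℝ) (u v : ι → ℝ) :
    qvol (fun x => ∏ k, f k (x k)) u v = ∏ k, (f k (v k) - f k (u k)) := by
  have h : ∀ k, f k (v k) - f k (u k) = ∑ b : Bool, (if b then - f k (u k) else f k (v k)) := by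
    intro k; simp; ring
  simp_rw [h]
  rw [Finset.prod_univ_sum]
  rw [Fintype.piFinset_univ]
  unfold qvol
  refine Finset.sum_congr rfl fun δ _ => ?_
  have h2 : ∀ k, (if δ k = true then - f k (u k) else f k (v k)) =
      (if δ k = true then (-1 : ℝ) else 1) * f k (if δ k then u k else v k) := by
    intro k; split_ifs <;> simp
  simp_rw [h2]
  rw [Finset.prod_mul_distrib]
  congr 1
  rw [Finset.prod_ite]; simp

lemma qvol_congr (g g' : (ι → ℝ) → ℝ) (u v : ι → ℝ)
    (h : ∀ x : ι → ℝ, (∀ k, x k = u k ∨ x k = v k) → g x = g' x) : qvol g u v = qvol g' u v := by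
  unfold qvol
  refine Finset.sum_congr rfl fun δ _ => ?_
  rw [h]
  intro k; by_cases hk : δ k <;> simp [hk]

lemma qvol_sum {α : Type*} (s : Finset α) (c : α → ℝ) (F : α → (ι → ℝ) → ℝ) (u v : ι → ℝ) :
    qvol (fun x => ∑ a ∈ s, c a * F a x) u v = ∑ a ∈ s, c a * qvol (F a) u v := by
  unfold qvol
  simp_rw [Finset.mul_sum]
  rw [Finset.sum_comm]
  refine Finset.sum_congr rfl fun a _ => Finset.sum_congr rfl fun δ _ => by ring

lemma exists_mobius {P : Type*} [Fintype P] [PartialOrder P] [DecidableLE P] (G : P → ℝ) :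
    ∃ w : P → ℝ, ∀ y, G y = ∑ a, w a * (if a ≤ y then 1 else 0) := by
  classical
  let w : P → ℝ := (wellFounded_lt (α := P)).fix
    (fun y W => G y - ∑ a : {a // a < y}, W a.1 a.2)
  have hw : ∀ y, w y = G y - ∑ a : {a // a < y}, w a.1 := fun y =>
    WellFounded.fix_eq _ _ y
  refine ⟨w, fun y => ?_⟩
  have h1 : ∑ a : {a // a < y}, w a.1 = ∑ a, if a < y then w a else 0 := by
    rw [← Finset.sum_filter, ← Finset.sum_subtype_eq_sum_filter]
    exact Finset.sum_congr (by ext; simp) (fun _ _ => rfl)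
  have h2 : ∑ a, w a * (if a ≤ y then 1 else 0) = ∑ a, ((if a < y then w a else 0) + if a = y then w a else 0) := by
    refine Finset.sum_congr rfl fun a _ => ?_
    by_cases h : a = y
    · subst h; simp
    · by_cases h' : a ≤ y
      · simp [h, h', lt_of_le_of_ne h' h]
      · have : ¬ a < y := fun hh => h' hh.le
        simp [h, h', this]
  rw [h2, Finset.sum_add_distrib, ← h1]
  simp [hw y]

/-- the grid point belonging to a cell of a face -/
def facePt {N : ℕ} (T : Finset ι) (l : {j // j ∈ T} → Fin N) : ι → Fin (N+1) :=
  fun k => if h : k ∈ T then (l ⟨k, h⟩).succ else 0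

lemma weight_eq (g : (ι → ℝ) → ℝ) {N : ℕ} (u : Fin (N+1) → ℝ) (hu : StrictMono u)
    (u0 : u 0 = 0) (w : (ι → Fin (N+1)) → ℝ)
    (hw : ∀ y : ι → Fin (N+1), g (fun k => u (y k)) = ∑ a, w a * (if ∀ k, a k ≤ y k then 1 else 0))
    (T : Finset ι) (l : {j // j ∈ T} → Fin N) :
    qvol (fun t : {j // j ∈ T} → ℝ => g fun k => if h : k ∈ T then t ⟨k, h⟩ else 0)
      (fun k => u (l k).castSucc) (fun k => u (l k).succ) = w (facePt T l) := by
  rw [qvol_congr _ (fun t => ∑ a, (w a * (if ∀ k : {k // k ∉ T}, a k = 0 then 1 else 0)) *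
    ∏ k : {j // j ∈ T}, (if u (a k) ≤ t k then (1:ℝ) else 0))]
  · rw [qvol_sum]
    have hq : ∀ a : ι → Fin (N+1), _ := fun a =>
      qvol_prod (fun (k : {j // j ∈ T}) s => if u (a k) ≤ s then (1:ℝ) else 0)
      (fun k => u (l k).castSucc) (fun k => u (l k).succ)
    simp_rw [hq]
    rw [Finset.sum_eq_single (facePt T l)]
    · rw [if_pos, Finset.prod_eq_one]
      · simp
      · rintro ⟨k, hk⟩ _
        simp [facePt, hk, hu.le_iff_le]
      · rintro ⟨k, hk⟩; simp [facePt, hk]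
    · intro a _ ha
      by_cases h0 : ∀ k : {k // k ∉ T}, a k = 0
      · obtain ⟨k, hk⟩ : ∃ k, a k ≠ facePt T l k := by
          by_contra! h; exact ha (funext h)
        by_cases hkT : k ∈ T
        · apply mul_eq_zero_of_right
          apply Finset.prod_eq_zero (Finset.mem_univ ⟨k, hkT⟩)
          simp only [hu.le_iff_le]
          simp only [facePt, hkT, dif_pos] at hk
          have : a k ≤ (l ⟨k, hkT⟩).succ ↔ a k ≤ (l ⟨k, hkT⟩).castSucc := by
            rw [Fin.le_def, Fin.le_def]
            have : (a k).val ≠ (l ⟨k, hkT⟩).succ.val := fun h => hk (Fin.ext h)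
            simp at this ⊢; omega
          simp [this]
        · exfalso; apply hk; rw [h0 ⟨k, hkT⟩]; simp [facePt, hkT]
      · simp only [if_neg h0]; simp
    · simp
  · intro t ht
    have : ∃ z : {j // j ∈ T} → Fin (N+1), ∀ k, t k = u (z k) := by
      refine ⟨fun k => if t k = u (l k).castSucc then (l k).castSucc else (l k).succ, fun k => ?_⟩
      rcases ht k with h | h
      · simp [h]
      · by_cases h' : t k = u (l k).castSucc
        · simp [h']
        · simp only [if_neg h']; exact h
    obtain ⟨z, hz⟩ := this
    have h1 := hw (fun k => if h : k ∈ T then z ⟨k, h⟩ else 0)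
    have h2 : (fun k => if h : k ∈ T then t ⟨k, h⟩ else 0) =
        (fun k => u (if h : k ∈ T then z ⟨k, h⟩ else 0)) := by
      funext k; split_ifs with h
      · exact hz _
      · exact u0.symm
    rw [h2, h1]
    refine Finset.sum_congr rfl fun a _ => ?_
    rw [mul_assoc]; congr 1
    simp_rw [hz, hu.le_iff_le]
    rw [Finset.prod_ite_zero]
    simp only [Finset.mem_univ, true_imp_iff, Finset.prod_const_one]
    rw [ite_zero_mul_ite_zero, mul_one]
    refine if_congr ?_ rfl rfl
    constructor
    · intro h
      refine ⟨fun k => ?_, fun k => ?_⟩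
      · have := h k; simp [k.2] at this; exact this
      · have := h k; simp [k.2] at this; exact this
    · rintro ⟨h, h'⟩ k
      by_cases hk : k ∈ T
      · simpa [hk] using h' ⟨k, hk⟩
      · simpa [hk] using h ⟨k, hk⟩

lemma facePt_inj {N : ℕ} (T : Finset ι) :
    Function.Injective (facePt T : ({j // j ∈ T} → Fin N) → ι → Fin (N+1)) := by
  intro l l' h
  funext k
  have := congrFun h k
  simpa [facePt, k.2] using this

lemma gridWeights (g : (ι → ℝ) → ℝ) (hg : hk0 g ≠ ⊤) {N : ℕ} (u : Fin (N+1) → ℝ)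
    (hu : StrictMono u) (u0 : u 0 = 0) (u1 : u (Fin.last N) = 1) :
    ∃ w : (ι → Fin (N+1)) → ℝ,
      (∀ y : ι → Fin (N+1), g (fun k => u (y k)) = ∑ a, w a * (if ∀ k, a k ≤ y k then 1 else 0)) ∧
      ∑ a, |w a| ≤ |g (fun _ => 0)| + (hk0 g).toReal := by
  obtain ⟨w, hw'⟩ := @exists_mobius (ι → Fin (N+1)) _ _
    (fun a y => inferInstanceAs (Decidable (∀ k, a k ≤ y k))) (fun y : ι → Fin (N+1) => g (fun k => u (y k)))
  have hw : ∀ y : ι → Fin (N+1), g (fun k => u (y k)) =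
      ∑ a, w a * (if ∀ k, a k ≤ y k then 1 else 0) := hw'
  refine ⟨w, hw, ?_⟩
  have key : ∑ a, ENNReal.ofReal |w a| ≤ ENNReal.ofReal |g (fun _ => 0)| + hk0 g := by
    rw [← Finset.sum_fiberwise (s := Finset.univ)
      (g := fun a : ι → Fin (N+1) => Finset.univ.filter (fun k => a k ≠ 0))]
    have : ENNReal.ofReal |g (fun _ => 0)| + hk0 g = ∑ T : Finset ι,
        ((if T = ∅ then ENNReal.ofReal |g (fun _ => 0)| else 0) + if T.Nonempty then
      vitali fun t : {j // j ∈ T} → ℝ =>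
        g fun k => if h : k ∈ T then t ⟨k, h⟩ else 0
    else 0) := by
      rw [Finset.sum_add_distrib]; simp [hk0]
    rw [this]
    refine Finset.sum_le_sum fun T _ => ?_
    have hsub : (Finset.univ.filter fun a : ι → Fin (N+1) =>
        (Finset.univ.filter (fun k => a k ≠ 0)) = T) ⊆ Finset.univ.image (facePt T) := by
      intro a ha
      simp only [Finset.mem_filter, Finset.mem_univ, true_and] at ha
      have hT : ∀ k, k ∈ T ↔ a k ≠ 0 := by intro k; rw [← ha]; simp
      simp only [Finset.mem_image, Finset.mem_univ, true_and]
      refine ⟨fun k => (a k).pred ((hT k).1 k.2), ?_⟩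
      funext k
      by_cases hk : k ∈ T
      · simp [facePt, hk]
      · simp only [facePt, hk, dif_neg, not_false_eq_true]
        have := (hT k).not.1 hk
        push Not at this; exact this.symm
    refine (Finset.sum_le_sum_of_subset hsub).trans ?_
    rw [Finset.sum_image (fun _ _ _ _ h => facePt_inj T h)]
    simp_rw [← weight_eq g u hu u0 w hw]
    rcases T.eq_empty_or_nonempty with rfl | hT
    · simp only [if_true, Finset.not_nonempty_empty, if_false, add_zero]
      simp [qvol]
    · rw [if_neg hT.ne_empty, if_pos hT, zero_add]
      unfold vitali
      exact le_iSup_of_le (fun _ => N) (le_iSup_of_le (fun _ => u) (le_iSup_of_le (fun _ => hu)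
        (le_iSup_of_le (fun _ => u0) (le_iSup_of_le (fun _ => u1) le_rfl))))
  rw [← ENNReal.ofReal_sum_of_nonneg (fun _ _ => abs_nonneg _)] at key
  have := ENNReal.toReal_mono (by finiteness) key
  rwa [ENNReal.toReal_add (by finiteness) hg, ENNReal.toReal_ofReal (by positivity),
    ENNReal.toReal_ofReal (by positivity)] at this

end A

section B
variable {ι : Type*} [Fintype ι] [DecidableEq ι]
set_option linter.unusedSectionVars false

lemma exists_grid (D : Finset ℝ) (hD : ∀ d ∈ D, d ∈ Set.Icc (0:ℝ) 1) :
    ∃ (N : ℕ) (u : Fin (N+1) → ℝ), StrictMono u ∧ u 0 = 0 ∧ u (Fin.last N) = 1 ∧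
      ∀ d ∈ D, ∃ i, u i = d := by
  set S : Finset ℝ := insert 0 (insert 1 D) with hS
  have hS01 : ∀ d ∈ S, d ∈ Set.Icc (0:ℝ) 1 := by
    intro d hd
    simp only [hS, Finset.mem_insert] at hd
    rcases hd with rfl | rfl | hd
    · simp
    · simp
    · exact hD d hd
  have h0 : (0:ℝ) ∈ S := by simp [hS]
  have h1 : (1:ℝ) ∈ S := by simp [hS]
  have hpos : 0 < S.card := Finset.card_pos.2 ⟨0, h0⟩
  obtain ⟨N, hN⟩ : ∃ N, S.card = N + 1 := ⟨S.card - 1, by omega⟩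
  have hsurj : ∀ d ∈ S, ∃ i, S.orderEmbOfFin hN i = d := by
    intro d hd
    have := Finset.range_orderEmbOfFin S hN
    have h : d ∈ Set.range (S.orderEmbOfFin hN) := by rw [this]; exact hd
    exact h
  have hmem : ∀ i, S.orderEmbOfFin hN i ∈ Set.Icc (0:ℝ) 1 := fun i =>
    hS01 _ (Finset.orderEmbOfFin_mem S hN i)
  refine ⟨N, S.orderEmbOfFin hN, (S.orderEmbOfFin hN).strictMono, ?_, ?_, fun d hd =>
    hsurj d (by simp [hS, hd])⟩
  · obtain ⟨i, hi⟩ := hsurj 0 h0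
    apply le_antisymm _ (hmem 0).1
    rw [← hi]
    exact (S.orderEmbOfFin hN).monotone (Fin.zero_le i)
  · obtain ⟨i, hi⟩ := hsurj 1 h1
    apply le_antisymm (hmem _).2
    rw [← hi]
    exact (S.orderEmbOfFin hN).monotone (Fin.le_last i)

def bx (x : ι → ℝ) : Set (ι → ℝ) := {t | ∀ j, 0 ≤ t j ∧ t j ≤ x j ∧ t j < 1}

def cell (T : Finset ι) (a b : {j // j ∈ T} → ℝ) : Set (ι → ℝ) :=
  {t | (∀ j : {j // j ∈ T}, a j < t j ∧ t j ≤ b j ∧ t j < 1) ∧ ∀ j : {j // j ∉ T}, t j = 0}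

def face (T : Finset ι) : Set (ι → ℝ) :=
  {t | (∀ j : {j // j ∈ T}, 0 < t j ∧ t j < 1) ∧ ∀ j : {j // j ∉ T}, t j = 0}

def fext (T : Finset ι) (t : {j // j ∈ T} → ℝ) : ι → ℝ := fun k => if h : k ∈ T then t ⟨k, h⟩ else 0

lemma measurable_bx (x : ι → ℝ) : MeasurableSet (bx x) := by
  unfold bx; measurability

lemma measurable_cell (T : Finset ι) (a b : {j // j ∈ T} → ℝ) : MeasurableSet (cell T a b) := by
  unfold cell; measurability

lemma measurable_face (T : Finset ι) : MeasurableSet (face T) := by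
  unfold face; measurability

lemma mem_bx_fext (T : Finset ι) (t : {j // j ∈ T} → ℝ) (s : ι → ℝ) :
    s ∈ bx (fext T t) ↔ (∀ j : {j // j ∉ T}, s j = 0) ∧
      ∀ k : {j // j ∈ T}, (0 ≤ s k ∧ s k ≤ t k ∧ s k < 1) := by
  constructor
  · intro h
    refine ⟨fun j => ?_, fun k => ?_⟩
    · have := h j
      simp [fext, j.2] at this
      linarith
    · have := h k
      simpa [fext, k.2] using this
  · rintro ⟨h, h'⟩ j
    by_cases hj : j ∈ T
    · simpa [fext, hj] using h' ⟨j, hj⟩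
    · simp [fext, hj, h ⟨j, hj⟩]

lemma qvol_measure (μ : Measure (ι → ℝ)) [IsFiniteMeasure μ] (T : Finset ι)
    (a b : {j // j ∈ T} → ℝ) (ha : ∀ k, 0 ≤ a k) (hab : ∀ k, a k ≤ b k) :
    qvol (fun t => μ.real (bx (fext T t))) a b = μ.real (cell T a b) := by
  classical
  have h1 : ∀ x : ι → ℝ, μ.real (bx x) = ∫ s, (bx x).indicator (fun _ => (1:ℝ)) s ∂μ := by
    intro x
    rw [integral_indicator (measurable_bx x)]; simp
  have hint : ∀ x : ι → ℝ, Integrable ((bx x).indicator (fun _ => (1:ℝ))) μ := fun x =>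
    (integrable_const 1).indicator (measurable_bx x)
  have h2 : qvol (fun t => μ.real (bx (fext T t))) a b =
      ∫ s, qvol (fun t => (bx (fext T t)).indicator (fun _ => (1:ℝ)) s) a b ∂μ := by
    unfold qvol
    rw [integral_finsetSum]
    · refine Finset.sum_congr rfl fun δ _ => ?_
      rw [integral_const_mul]; exact congrArg _ (h1 _)
    · intro δ _
      exact (hint _).const_mul _
  have h3 : ∀ s, qvol (fun t => (bx (fext T t)).indicator (fun _ => (1:ℝ)) s) a b =
      (cell T a b).indicator (fun _ => (1:ℝ)) s := by
    intro s
    have e1 : (fun t => (bx (fext T t)).indicator (fun _ => (1:ℝ)) s) =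
        (fun t => ∑ x ∈ ({()} : Finset Unit), (if ∀ j : {j // j ∉ T}, s j = 0 then (1:ℝ) else 0) *
          ∏ k : {j // j ∈ T}, (if 0 ≤ s k ∧ s k ≤ t k ∧ s k < 1 then (1:ℝ) else 0)) := by
      funext t
      rw [Finset.prod_ite_zero]
      simp only [Finset.mem_univ, true_imp_iff, Finset.prod_const_one, Finset.sum_singleton]
      rw [ite_zero_mul_ite_zero, mul_one, Set.indicator_apply]
      exact if_congr (mem_bx_fext T t s) rfl rfl
    rw [e1, qvol_sum, Finset.sum_singleton,
      qvol_prod (fun (k : {j // j ∈ T}) r => if 0 ≤ s k ∧ s k ≤ r ∧ s k < 1 then (1:ℝ) else 0)]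
    have e2 : ∀ k : {j // j ∈ T}, ((if 0 ≤ s k ∧ s k ≤ b k ∧ s k < 1 then (1:ℝ) else 0) -
        (if 0 ≤ s k ∧ s k ≤ a k ∧ s k < 1 then (1:ℝ) else 0)) =
        if a k < s k ∧ s k ≤ b k ∧ s k < 1 then 1 else 0 := by
      intro k
      have := ha k
      have := hab k
      by_cases c1 : a k < s k
      · have c2 : ¬ s k ≤ a k := by linarith
        have c3 : 0 ≤ s k := by linarith
        simp [c1, c2, c3]
      · have c2 : s k ≤ a k := by linarith
        have c3 : s k ≤ b k := by linarith
        simp [c1, c2, c3]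
    simp_rw [e2]
    rw [Finset.prod_ite_zero]
    simp only [Finset.mem_univ, true_imp_iff, Finset.prod_const_one]
    rw [ite_zero_mul_ite_zero, mul_one, Set.indicator_apply]
    refine if_congr ?_ rfl rfl
    unfold cell
    exact and_comm
  rw [h2]
  simp_rw [h3]
  rw [integral_indicator (measurable_cell T a b)]; simp

lemma exists_interval {N : ℕ} (u : Fin (N+1) → ℝ) (u0 : u 0 = 0)
    (u1 : u (Fin.last N) = 1) (s : ℝ) (h0 : 0 < s) (h1 : s < 1) :
    ∃ l : Fin N, u l.castSucc < s ∧ s ≤ u l.succ := by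
  by_contra! h
  have : ∀ i, u i < s := by
    intro i
    induction i using Fin.induction with
    | zero => rw [u0]; exact h0
    | succ i ih => exact h i ih
  have := this (Fin.last N)
  linarith

section grid
variable (T : Finset ι) (N : {j // j ∈ T} → ℕ) (u : ∀ k, Fin (N k + 1) → ℝ)
    (hu : ∀ k, StrictMono (u k)) (u0 : ∀ k, u k 0 = 0) (u1 : ∀ k, u k (Fin.last (N k)) = 1)

def gcell (l : ∀ k, Fin (N k)) : Set (ι → ℝ) :=
  cell T (fun k => u k ((l k).castSucc)) fun k => u k ((l k).succ)

include hu u0 u1 in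
lemma gcell_union : face T = ⋃ l, gcell T N u l := by
  ext t
  simp only [Set.mem_iUnion]
  constructor
  · rintro ⟨h, h'⟩
    choose l hl using fun k => exists_interval (u k) (u0 k) (u1 k) (t k) (h k).1 (h k).2
    exact ⟨l, fun k => ⟨(hl k).1, (hl k).2, (h k).2⟩, h'⟩
  · rintro ⟨l, h, h'⟩
    refine ⟨fun k => ⟨lt_of_le_of_lt ?_ (h k).1, (h k).2.2⟩, h'⟩
    rw [← u0 k]
    exact (hu k).monotone (Fin.zero_le _)

include hu in
lemma gcell_disj : Pairwise (Function.onFun Disjoint (gcell T N u)) := by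
  intro l l' hl
  rw [Function.onFun, Set.disjoint_left]
  rintro t ⟨h, -⟩ ⟨h', -⟩
  apply hl
  funext k
  have a := h k
  have b := h' k
  rcases lt_trichotomy (l k) (l' k) with c | c | c
  · have : u k (l k).succ ≤ u k (l' k).castSucc := (hu k).monotone (by
      rw [Fin.le_def]; rw [Fin.lt_def] at c; simp; omega)
    linarith [a.2.1, b.1]
  · exact c
  · have : u k (l' k).succ ≤ u k (l k).castSucc := (hu k).monotone (by
      rw [Fin.le_def]; rw [Fin.lt_def] at c; simp; omega)
    linarith [b.2.1, a.1]

include hu u0 u1 in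
lemma measure_face (μ : Measure (ι → ℝ)) : μ (face T) = ∑ l, μ (gcell T N u l) := by
  rw [gcell_union T N u hu u0 u1, measure_iUnion (gcell_disj T N u hu)
    (fun l => measurable_cell _ _ _), tsum_fintype]

end grid

lemma qvol_sub (f g : (ι → ℝ) → ℝ) (u v : ι → ℝ) :
    qvol (fun x => f x - g x) u v = qvol f u v - qvol g u v := by
  unfold qvol
  rw [← Finset.sum_sub_distrib]
  exact Finset.sum_congr rfl fun _ _ => by ring

lemma qvol_signed (g : (ι → ℝ) → ℝ) (ν : SignedMeasure (ι → ℝ))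
    (hg : ∀ x : ι → ℝ, (∀ k, x k ∈ Set.Icc (0 : ℝ) 1) → g x = ν (bx x))
    (T : Finset ι) (a b : {j // j ∈ T} → ℝ) (ha : ∀ k, 0 ≤ a k) (hab : ∀ k, a k ≤ b k)
    (hb : ∀ k, b k ≤ 1) :
    qvol (fun t => g (fext T t)) a b = ν.toJordanDecomposition.posPart.real (cell T a b) -
      ν.toJordanDecomposition.negPart.real (cell T a b) := by
  rw [← qvol_measure _ T a b ha hab, ← qvol_measure _ T a b ha hab, ← qvol_sub]
  apply qvol_congr
  intro x hx
  rw [hg, SignedMeasure.apply_eq_posPart_real_sub_negPart_real _ (measurable_bx _)]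
  intro k
  by_cases hk : k ∈ T
  · simp only [fext, hk, dif_pos]
    have := ha ⟨k, hk⟩
    have := hab ⟨k, hk⟩
    have := hb ⟨k, hk⟩
    rcases hx ⟨k, hk⟩ with h | h <;> rw [h] <;> constructor <;> linarith
  · simp [fext, hk]

lemma qvol_grid (g : (ι → ℝ) → ℝ) (ν : SignedMeasure (ι → ℝ))
    (hg : ∀ x : ι → ℝ, (∀ k, x k ∈ Set.Icc (0 : ℝ) 1) → g x = ν (bx x))
    (T : Finset ι) (N : {j // j ∈ T} → ℕ) (u : ∀ k, Fin (N k + 1) → ℝ)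
    (hu : ∀ k, StrictMono (u k)) (u0 : ∀ k, u k 0 = 0) (u1 : ∀ k, u k (Fin.last (N k)) = 1)
    (l : ∀ k, Fin (N k)) :
    qvol (fun t => g (fext T t)) (fun k => u k ((l k).castSucc)) (fun k => u k ((l k).succ)) =
    ν.toJordanDecomposition.posPart.real (gcell T N u l) -
      ν.toJordanDecomposition.negPart.real (gcell T N u l) := by
  apply qvol_signed g ν hg
  · intro k; rw [← u0 k]; exact (hu k).monotone (Fin.zero_le _)
  · intro k; exact (hu k).monotone (Fin.castSucc_le_succ _)
  · intro k; rw [← u1 k]; exact (hu k).monotone (Fin.le_last _)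

lemma vitali_le (g : (ι → ℝ) → ℝ) (ν : SignedMeasure (ι → ℝ))
    (hg : ∀ x : ι → ℝ, (∀ k, x k ∈ Set.Icc (0 : ℝ) 1) → g x = ν (bx x)) (T : Finset ι) :
    vitali (fun t => g (fext T t)) ≤ ν.totalVariation (face T) := by
  unfold vitali
  refine iSup_le fun N => iSup_le fun u => iSup_le fun hu => iSup_le fun u0 => iSup_le fun u1 => ?_
  rw [measure_face T N u hu u0 u1]
  refine Finset.sum_le_sum fun l _ => ?_
  rw [qvol_grid g ν hg T N u hu u0 u1 l, SignedMeasure.totalVariation, Measure.add_apply]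
  rw [← ofReal_measureReal, ← ofReal_measureReal, ← ENNReal.ofReal_add (by positivity) (by positivity)]
  apply ENNReal.ofReal_le_ofReal
  rw [abs_le]
  constructor <;> linarith [measureReal_nonneg (μ := ν.toJordanDecomposition.posPart) (s := gcell T N u l),
    measureReal_nonneg (μ := ν.toJordanDecomposition.negPart) (s := gcell T N u l)]

def respects (D : Finset ℝ) (A : Set (ι → ℝ)) : Prop :=
  ∀ t t' : ι → ℝ, (∀ j, ∀ q ∈ D, t j ≤ q ↔ t' j ≤ q) → (t ∈ A ↔ t' ∈ A)

lemma approx_alg (μ : Measure (ι → ℝ)) [IsFiniteMeasure μ] (P : Set (ι → ℝ)) (hP : MeasurableSet P)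
    (ε : ℝ) (hε : 0 < ε) :
    ∃ (A : Set (ι → ℝ)) (D : Finset ℝ), MeasurableSet A ∧ respects D A ∧
      μ (symmDiff P A) < ENNReal.ofReal ε := by
  let 𝒜 : Set (Set (ι → ℝ)) := {A | MeasurableSet A ∧ ∃ D, respects D A}
  have hA : IsSetAlgebra 𝒜 := by
    refine ⟨⟨MeasurableSet.empty, ∅, fun t t' _ => by simp⟩, ?_, ?_⟩
    · rintro s ⟨hs, D, hD⟩
      exact ⟨hs.compl, D, fun t t' h => not_congr (hD t t' h)⟩
    · rintro s s' ⟨hs, D, hD⟩ ⟨hs', D', hD'⟩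
      refine ⟨hs.union hs', D ∪ D', fun t t' h => or_congr (hD t t' ?_) (hD' t t' ?_)⟩
      · intro j q hq; exact h j q (by simp [hq])
      · intro j q hq; exact h j q (by simp [hq])
  have hgen : (MeasurableSpace.pi : MeasurableSpace (ι → ℝ)) = MeasurableSpace.generateFrom 𝒜 := by
    apply le_antisymm
    · refine iSup_le fun j => ?_
      have hb : (inferInstance : MeasurableSpace ℝ) = MeasurableSpace.generateFrom (Set.range Set.Iic) :=
        (BorelSpace.measurable_eq (α := ℝ)).trans (borel_eq_generateFrom_Iic ℝ)
      change MeasurableSpace.comap _ (inferInstance : MeasurableSpace ℝ) ≤ _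
      rw [hb, MeasurableSpace.comap_generateFrom]
      apply MeasurableSpace.generateFrom_mono
      rintro _ ⟨_, ⟨q, rfl⟩, rfl⟩
      refine ⟨measurable_pi_apply j measurableSet_Iic, {q}, fun t t' h => ?_⟩
      exact h j q (by simp)
    · exact MeasurableSpace.generateFrom_le fun s hs => hs.1
  have hd := Measure.MeasureDense.of_generateFrom_isSetAlgebra_finite μ hA hgen
  obtain ⟨A, ⟨hA, D, hD⟩, h⟩ := hd.approx P hP (measure_ne_top _ _) ε hε
  exact ⟨A, D, hA, hD, h⟩

lemma le_vitali (g : (ι → ℝ) → ℝ) (ν : SignedMeasure (ι → ℝ))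
    (hg : ∀ x : ι → ℝ, (∀ k, x k ∈ Set.Icc (0 : ℝ) 1) → g x = ν (bx x)) (T : Finset ι) :
    ν.totalVariation (face T) ≤ vitali (fun t => g (fext T t)) := by
  apply ENNReal.le_of_forall_pos_le_add
  intro ε hε _
  set p := ν.toJordanDecomposition.posPart with hp
  set n := ν.toJordanDecomposition.negPart with hn
  obtain ⟨P, hP, -, -, hpP, hnP⟩ := ν.toJordanDecomposition.exists_compl_positive_negative
  rw [← hp] at hpP
  rw [← hn] at hnP
  obtain ⟨A, D, hA, hD, hAε⟩ := approx_alg (p + n) P hP (ε / 2) (by positivity)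
  obtain ⟨N, u, hu, u0, u1, hDu⟩ := exists_grid (D.filter (· ∈ Set.Icc (0:ℝ) 1)) (by simp)
  set τ : Measure (ι → ℝ) := p.restrict A + n.restrict Aᶜ with hτ
  have hτε : τ Set.univ ≤ ENNReal.ofReal (ε / 2) := by
    refine le_trans ?_ hAε.le
    rw [hτ, Measure.add_apply, Measure.restrict_apply_univ, Measure.restrict_apply_univ,
      Measure.add_apply]
    gcongr ?_ + ?_
    · have : p A ≤ p (symmDiff P A ∪ P) := measure_mono (by
        intro x hx; by_cases h : x ∈ P
        · exact Or.inr h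
        · exact Or.inl (Or.inr ⟨hx, h⟩))
      refine this.trans ((measure_union_le _ _).trans ?_)
      rw [hpP, add_zero]
    · have : n Aᶜ ≤ n (symmDiff P A ∪ Pᶜ) := measure_mono (by
        intro x hx; by_cases h : x ∈ P
        · exact Or.inl (Or.inl ⟨h, hx⟩)
        · exact Or.inr h)
      refine this.trans ((measure_union_le _ _).trans ?_)
      rw [hnP, add_zero]
  let N' : {j // j ∈ T} → ℕ := fun _ => N
  let u' : ∀ k, Fin (N' k + 1) → ℝ := fun _ => u
  have hcell : ∀ l, gcell T N' u' l ⊆ A ∨ gcell T N' u' l ⊆ Aᶜ := by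
    intro l
    by_cases hne : ∃ t ∈ gcell T N' u' l, t ∈ A
    · left
      obtain ⟨t, ht, htA⟩ := hne
      intro t' ht'
      refine (hD t t' ?_).1 htA
      intro j q hq
      by_cases hj : j ∈ T
      · have b := ht.1 ⟨j, hj⟩
        have b' := ht'.1 ⟨j, hj⟩
        simp only [u'] at b b'
        have c0 : 0 ≤ u (l ⟨j, hj⟩).castSucc := by rw [← u0]; exact hu.monotone (Fin.zero_le _)
        by_cases hq01 : q ∈ Set.Icc (0:ℝ) 1
        · obtain ⟨i, rfl⟩ := hDu q (by simp [hq]; exact hq01)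
          by_cases hi : (l ⟨j, hj⟩).succ ≤ i
          · have := hu.monotone hi
            exact iff_of_true (by linarith [b.2.1]) (by linarith [b'.2.1])
          · have : i ≤ (l ⟨j, hj⟩).castSucc := by
              rw [Fin.le_def] at hi ⊢; simp at hi ⊢; omega
            have := hu.monotone this
            exact iff_of_false (by linarith [b.1]) (by linarith [b'.1])
        · have : q < 0 ∨ 1 < q := by
            by_contra! h; exact hq01 h
          rcases this with h | h
          · exact iff_of_false (by linarith [b.1]) (by linarith [b'.1])
          · exact iff_of_true (by linarith [b.2.2]) (by linarith [b'.2.2])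
      · rw [ht.2 ⟨j, hj⟩, ht'.2 ⟨j, hj⟩]
    · right
      push Not at hne
      exact hne
  have main : ∀ l, ν.totalVariation (gcell T N' u' l) ≤
      ENNReal.ofReal |p.real (gcell T N' u' l) - n.real (gcell T N' u' l)|
        + 2 * τ (gcell T N' u' l) := by
    intro l
    set C := gcell T N' u' l
    have hC : MeasurableSet C := measurable_cell _ _ _
    rw [SignedMeasure.totalVariation, Measure.add_apply, ← hp, ← hn]
    have hpr : p C = ENNReal.ofReal (p.real C) := by rw [ofReal_measureReal]
    have hnr : n C = ENNReal.ofReal (n.real C) := by rw [ofReal_measureReal]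
    have hp0 : 0 ≤ p.real C := measureReal_nonneg
    have hn0 : 0 ≤ n.real C := measureReal_nonneg
    rcases hcell l with h | h
    · have : p C ≤ τ C := by
        rw [hτ, Measure.add_apply, Measure.restrict_apply hC, Set.inter_eq_left.2 h]
        exact le_self_add
      refine le_trans ?_ (add_le_add_right (mul_le_mul_right this 2) _)
      rw [hpr, hnr, ← ENNReal.ofReal_ofNat 2, ← ENNReal.ofReal_mul (by norm_num), ← ENNReal.ofReal_add hp0 hn0,
        ← ENNReal.ofReal_add (abs_nonneg _) (by positivity)]
      apply ENNReal.ofReal_le_ofReal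
      linarith [neg_abs_le (p.real C - n.real C)]
    · have : n C ≤ τ C := by
        rw [hτ, Measure.add_apply, Measure.restrict_apply hC, Measure.restrict_apply hC,
          Set.inter_eq_left.2 h]
        exact le_add_self
      refine le_trans ?_ (add_le_add_right (mul_le_mul_right this 2) _)
      rw [hpr, hnr, ← ENNReal.ofReal_ofNat 2, ← ENNReal.ofReal_mul (by norm_num), ← ENNReal.ofReal_add hp0 hn0,
        ← ENNReal.ofReal_add (abs_nonneg _) (by positivity)]
      apply ENNReal.ofReal_le_ofReal
      linarith [le_abs_self (p.real C - n.real C)]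
  rw [measure_face T N' u' (fun _ => hu) (fun _ => u0) (fun _ => u1)]
  refine (Finset.sum_le_sum fun l _ => main l).trans ?_
  rw [Finset.sum_add_distrib, ← Finset.mul_sum,
    ← measure_face T N' u' (fun _ => hu) (fun _ => u0) (fun _ => u1)]
  gcongr ?_ + ?_
  · simp_rw [hp, hn, ← qvol_grid g ν hg T N' u' (fun _ => hu) (fun _ => u0) (fun _ => u1)]
    unfold vitali
    exact le_iSup_of_le N' (le_iSup_of_le u' (le_iSup_of_le (fun _ => hu)
        (le_iSup_of_le (fun _ => u0) (le_iSup_of_le (fun _ => u1) le_rfl))))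
  · calc 2 * τ (face T) ≤ 2 * ENNReal.ofReal (ε / 2) := by
          gcongr; exact (measure_mono (Set.subset_univ _)).trans hτε
      _ = ε := by
          rw [← ENNReal.ofReal_ofNat 2, ← ENNReal.ofReal_mul (by norm_num)]
          rw [mul_div_cancel₀ _ (by norm_num)]; simp

lemma part2 (g : (ι → ℝ) → ℝ) (ν : SignedMeasure (ι → ℝ))
    (hg : ∀ x : ι → ℝ, (∀ k, x k ∈ Set.Icc (0 : ℝ) 1) → g x = ν (bx x)) :
    ν.totalVariation ({t : ι → ℝ | ∀ j, 0 ≤ t j ∧ t j < 1} \ {fun _ => 0}) = hk0 g := by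
  have h1 : ({t : ι → ℝ | ∀ j, 0 ≤ t j ∧ t j < 1} \ {fun _ => 0}) =
      ⋃ T ∈ (Finset.univ.filter (fun T : Finset ι => T.Nonempty)), face T := by
    ext t
    simp only [Set.mem_iUnion, Finset.mem_filter, Finset.mem_univ, true_and, exists_prop]
    constructor
    · rintro ⟨h, h'⟩
      obtain ⟨k, hk⟩ : ∃ k, t k ≠ 0 := by
        by_contra! hh; exact h' (funext hh)
      refine ⟨Finset.univ.filter (fun k => t k ≠ 0), ⟨k, by simp [hk]⟩, fun j => ?_, fun j => ?_⟩
      · have := (Finset.mem_filter.1 j.2).2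
        exact ⟨lt_of_le_of_ne (h j).1 (Ne.symm this), (h j).2⟩
      · have := j.2
        simpa using this
    · rintro ⟨T, ⟨k, hk⟩, h, h'⟩
      refine ⟨fun j => ?_, fun h0 => ?_⟩
      · by_cases hj : j ∈ T
        · exact ⟨(h ⟨j, hj⟩).1.le, (h ⟨j, hj⟩).2⟩
        · rw [h' ⟨j, hj⟩]; simp
      · have := (h ⟨k, hk⟩).1
        rw [Set.mem_singleton_iff] at h0
        rw [h0] at this; simp at this
  rw [h1, measure_biUnion_finset]
  · unfold hk0
    rw [Finset.sum_filter]
    refine Finset.sum_congr rfl fun T _ => ?_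
    split_ifs with hT
    · exact le_antisymm (le_vitali g ν hg T) (vitali_le g ν hg T)
    · rfl
  · intro T _ T' _ hTT
    rw [Function.onFun, Set.disjoint_left]
    rintro t ⟨h, h'⟩ ⟨k, k'⟩
    apply hTT
    ext j
    constructor
    · intro hj; by_contra hj'
      have := (h ⟨j, hj⟩).1
      rw [k' ⟨j, hj'⟩] at this; simp at this
    · intro hj; by_contra hj'
      have := (k ⟨j, hj⟩).1
      rw [h' ⟨j, hj'⟩] at this; simp at this
  · intro T _; exact measurable_face T

end B

section C
variable {ι : Type*} [Fintype ι] [DecidableEq ι]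
set_option linter.unusedSectionVars false

lemma tv_null {α : Type*} [MeasurableSpace α] (ν : SignedMeasure α) (A : Set α) (hA : MeasurableSet A)
    (h : ∀ B ⊆ A, MeasurableSet B → ν B = 0) : ν.totalVariation A = 0 := by
  obtain ⟨P, hP, -, -, hpP, hnP⟩ := ν.toJordanDecomposition.exists_compl_positive_negative
  rw [SignedMeasure.totalVariation, Measure.add_apply, add_eq_zero]
  constructor
  · have h1 := h (A \ P) Set.sdiff_subset (hA.diff hP)
    rw [SignedMeasure.apply_eq_posPart_real_sub_negPart_real _ (hA.diff hP)] at h1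
    have h2 : ν.toJordanDecomposition.negPart (A \ P) = 0 :=
      measure_mono_null (fun x hx => hx.2) hnP
    rw [measureReal_def, measureReal_def, h2] at h1
    simp only [ENNReal.toReal_zero, sub_zero] at h1
    rw [ENNReal.toReal_eq_zero_iff] at h1
    have h3 := h1.resolve_right (measure_ne_top _ _)
    have : A ⊆ (A \ P) ∪ P := by intro x hx; by_cases h : x ∈ P <;> simp [h, hx]
    exact measure_mono_null this (measure_union_null h3 hpP)
  · have h1 := h (A ∩ P) Set.inter_subset_left (hA.inter hP)
    rw [SignedMeasure.apply_eq_posPart_real_sub_negPart_real _ (hA.inter hP)] at h1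
    have h2 : ν.toJordanDecomposition.posPart (A ∩ P) = 0 :=
      measure_mono_null (fun x hx => hx.2) hpP
    rw [measureReal_def, measureReal_def, h2] at h1
    simp only [ENNReal.toReal_zero, zero_sub, neg_eq_zero] at h1
    rw [ENNReal.toReal_eq_zero_iff] at h1
    have h3 := h1.resolve_right (measure_ne_top _ _)
    have : A ⊆ (A ∩ P) ∪ Pᶜ := by intro x hx; by_cases h : x ∈ P <;> simp [h, hx]
    exact measure_mono_null this (measure_union_null h3 hnP)

lemma measurable_Q : MeasurableSet {t : ι → ℝ | ∀ j, 0 ≤ t j ∧ t j < 1} := by measurability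

lemma uniq (ν₁ ν₂ : SignedMeasure (ι → ℝ))
    (h₁ : ν₁.totalVariation {t : ι → ℝ | ∀ j, 0 ≤ t j ∧ t j < 1}ᶜ = 0)
    (h₂ : ν₂.totalVariation {t : ι → ℝ | ∀ j, 0 ≤ t j ∧ t j < 1}ᶜ = 0)
    (h : ∀ x : ι → ℝ, (∀ k, x k ∈ Set.Icc (0 : ℝ) 1) → ν₁ (bx x) = ν₂ (bx x)) : ν₁ = ν₂ := by
  have e1 : (ν₁ - ν₂).totalVariation {t : ι → ℝ | ∀ j, 0 ≤ t j ∧ t j < 1}ᶜ = 0 := by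
    apply tv_null _ _ measurable_Q.compl
    intro B hB hBm
    rw [sub_apply, ν₁.null_of_totalVariation_zero (measure_mono_null hB h₁),
      ν₂.null_of_totalVariation_zero (measure_mono_null hB h₂), sub_zero]
  have hz : ∀ x : ι → ℝ, (∀ k, x k ∈ Set.Icc (0 : ℝ) 1) → (0:ℝ) = (ν₁ - ν₂) (bx x) := by
    intro x hx
    rw [sub_apply, h x hx, sub_self]
  have e2 := part2 (fun _ => 0) (ν₁ - ν₂) hz
  have e3 : hk0 (fun _ : ι → ℝ => (0:ℝ)) = 0 := by simp [hk0, vitali, qvol]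
  rw [e3] at e2
  have e4 : (ν₁ - ν₂).totalVariation {fun _ => (0:ℝ)} = 0 := by
    apply tv_null _ _ (measurableSet_singleton _)
    intro B hB hBm
    rcases Set.subset_singleton_iff_eq.1 hB with rfl | rfl
    · simp
    · have := hz (fun _ => 0) (by simp)
      refine Eq.trans ?_ this.symm
      congr 1
      ext t
      simp only [bx, Set.mem_singleton_iff, Set.mem_ofPred_eq]
      constructor
      · rintro rfl j; simp
      · intro h; funext j; linarith [h j]
  have e5 : (ν₁ - ν₂).totalVariation Set.univ = 0 := by
    refine measure_mono_null ?_ (measure_union_null (measure_union_null e1 e2) e4)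
    intro t _
    by_cases h1 : t ∈ {t : ι → ℝ | ∀ j, 0 ≤ t j ∧ t j < 1}
    · by_cases h2 : t ∈ ({fun _ => (0:ℝ)} : Set (ι → ℝ))
      · exact Or.inr h2
      · exact Or.inl (Or.inr ⟨h1, h2⟩)
    · exact Or.inl (Or.inl h1)
  rw [← sub_eq_zero]
  ext B hB
  exact (ν₁ - ν₂).null_of_totalVariation_zero (measure_mono_null (Set.subset_univ _) e5)

def RC (g : (ι → ℝ) → ℝ) : Prop :=
  ∀ x : ι → ℝ, (∀ k, x k ∈ Set.Icc (0 : ℝ) 1) → ∀ j,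
        ContinuousWithinAt (fun s => g (Function.update x j s))
          (Set.Icc (x j) 1) (x j)

lemma update_mem {z : ι → ℝ} (hz : ∀ k, z k ∈ Set.Icc (0 : ℝ) 1) (j : ι) {s : ℝ}
    (hs : s ∈ Set.Icc (0 : ℝ) 1) : ∀ k, Function.update z j s k ∈ Set.Icc (0 : ℝ) 1 := by
  intro k
  by_cases h : k = j
  · subst h; simpa using hs
  · simpa [h] using hz k

lemma strips (g : (ι → ℝ) → ℝ) (hg : hk0 g ≠ ⊤) (j : ι) (K : ℕ) (s s' : ℕ → ℝ) (z : ℕ → ι → ℝ)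
    (hs : ∀ k, s k ∈ Set.Icc (0:ℝ) 1) (hs' : ∀ k, s' k ∈ Set.Icc (0:ℝ) 1)
    (hz : ∀ k i, z k i ∈ Set.Icc (0:ℝ) 1) (hss : ∀ k, s' k ≤ s k)
    (hdis : ∀ k k', k < k' → s k' ≤ s' k) :
    ∑ k ∈ Finset.range K, |g (Function.update (z k) j (s k)) - g (Function.update (z k) j (s' k))| ≤
      |g (fun _ => 0)| + (hk0 g).toReal := by
  obtain ⟨N, u, hu, u0, u1, hD⟩ := exists_grid ((Finset.range K).biUnion fun k =>
    {s k, s' k} ∪ Finset.univ.image (z k)) (by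
      intro d hd
      simp only [Finset.mem_biUnion, Finset.mem_union, Finset.mem_insert, Finset.mem_singleton,
        Finset.mem_image, Finset.mem_univ, true_and] at hd
      obtain ⟨k, -, (rfl | rfl) | ⟨i, rfl⟩⟩ := hd
      · exact hs k
      · exact hs' k
      · exact hz k i)
  obtain ⟨w, hw, hwB⟩ := gridWeights g hg u hu u0 u1
  refine le_trans ?_ hwB
  have main : ∀ k ∈ Finset.range K,
      |g (Function.update (z k) j (s k)) - g (Function.update (z k) j (s' k))| ≤
      ∑ a, |w a| * (if s' k < u (a j) ∧ u (a j) ≤ s k then 1 else 0) := by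
    intro k hk
    have hD' : ∀ d ∈ ({s k, s' k} ∪ Finset.univ.image (z k) : Finset ℝ), ∃ i, u i = d := fun d hd =>
      hD d (Finset.mem_biUnion.2 ⟨k, hk, hd⟩)
    obtain ⟨i, hi⟩ := hD' (s k) (by simp)
    obtain ⟨i', hi'⟩ := hD' (s' k) (by simp)
    choose y hy using fun i => hD' (z k i) (by simp)
    have e1 : Function.update (z k) j (s k) = fun l => u (Function.update y j i l) := by
      funext l
      by_cases h : l = j
      · subst h; simp [hi]
      · simp [h, hy]
    have e2 : Function.update (z k) j (s' k) = fun l => u (Function.update y j i' l) := by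
      funext l
      by_cases h : l = j
      · subst h; simp [hi']
      · simp [h, hy]
    rw [e1, e2, hw, hw, ← Finset.sum_sub_distrib]
    refine (Finset.abs_sum_le_sum_abs _ _).trans (Finset.sum_le_sum fun a _ => ?_)
    rw [← mul_sub, abs_mul]
    gcongr
    rw [← hi, ← hi']
    simp only [hu.lt_iff_lt, hu.le_iff_le]
    have hii : i' ≤ i := by rw [← hu.le_iff_le, hi, hi']; exact hss k
    have q : ∀ i, (∀ l, a l ≤ Function.update y j i l) ↔ (∀ l, l ≠ j → a l ≤ y l) ∧ a j ≤ i := by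
      intro i
      constructor
      · intro h
        refine ⟨fun l hl => by simpa [hl] using h l, by simpa using h j⟩
      · rintro ⟨h, h'⟩ l
        by_cases hl : l = j
        · subst hl; simpa using h'
        · simpa [hl] using h l hl
    simp_rw [q]
    by_cases c : ∀ l, l ≠ j → a l ≤ y l
    · by_cases c1 : a j ≤ i'
      · have c2 : a j ≤ i := c1.trans hii
        simp [c1, c2]
        split_ifs <;> norm_num
      · have c3 : i' < a j := not_le.1 c1
        by_cases c2 : a j ≤ i
        · simp [c1, c2, c3]
          split_ifs <;> norm_num
        · simp [c1, c2]
    · simp only [c, false_and, if_false, sub_self, abs_zero]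
      positivity
  refine (Finset.sum_le_sum main).trans ?_
  rw [Finset.sum_comm]
  refine Finset.sum_le_sum fun a _ => ?_
  rw [← Finset.mul_sum]
  refine mul_le_of_le_one_right (abs_nonneg _) ?_
  rw [Finset.sum_boole]
  have : ((Finset.range K).filter fun k => s' k < u (a j) ∧ u (a j) ≤ s k).card ≤ 1 := by
    rw [Finset.card_le_one]
    intro k hk k' hk'
    simp only [Finset.mem_filter] at hk hk'
    rcases lt_trichotomy k k' with h | h | h
    · linarith [hdis k k' h]
    · exact h
    · linarith [hdis k' k h]
  exact_mod_cast this

lemma unif_right (g : (ι → ℝ) → ℝ) (hg : hk0 g ≠ ⊤) (hrc : RC g) (j : ι) (c : ℝ) (hc : 0 ≤ c)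
    (η : ℝ) (hη : 0 < η) :
    ∃ ε > 0, ∀ s, c ≤ s → s ≤ c + ε → s ≤ 1 → ∀ z : ι → ℝ, (∀ k, z k ∈ Set.Icc (0 : ℝ) 1) →
      |g (Function.update z j s) - g (Function.update z j c)| ≤ η := by
  by_contra! H
  have H2 : ∀ ε : {ε : ℝ // 0 < ε}, ∃ (s s' : ℝ) (z : ι → ℝ), c < s' ∧ s' < s ∧ s ≤ c + ε ∧ s ≤ 1 ∧
      (∀ k, z k ∈ Set.Icc (0 : ℝ) 1) ∧
      η < |g (Function.update z j s) - g (Function.update z j s')| := by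
    rintro ⟨ε, hε⟩
    obtain ⟨s, hcs, hsε, hs1, z, hz, hlt⟩ := H ε hε
    have hne : c < s := by
      rcases hcs.eq_or_lt with h | h
      · subst h; simp at hlt; linarith
      · exact h
    have hcont := hrc (Function.update z j c) (update_mem hz j ⟨hc, by linarith⟩) j
    simp only [Function.update_idem, Function.update_self] at hcont
    have hcont2 : Filter.Tendsto (fun s' => |g (Function.update z j s) - g (Function.update z j s')|)
        (nhdsWithin c (Set.Ioo c s)) (nhds |g (Function.update z j s) - g (Function.update z j c)|) := by
      refine (Filter.Tendsto.sub tendsto_const_nhds (hcont.mono_left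
        (nhdsWithin_mono _ ?_))).abs
      intro r hr; exact ⟨hr.1.le, by linarith [hr.2]⟩
    have : (nhdsWithin c (Set.Ioo c s)).NeBot := by
      rw [nhdsWithin_Ioo_eq_nhdsGT hne]; infer_instance
    obtain ⟨s', h1, h2⟩ := ((hcont2.eventually (lt_mem_nhds hlt)).and self_mem_nhdsWithin).exists
    exact ⟨s, s', z, h2.1, h2.2, hsε, hs1, hz, h1⟩
  choose S S' Z h1 h2 h3 h4 h5 h6 using H2
  let e : ℕ → {ε : ℝ // 0 < ε} := fun k => Nat.rec ⟨1, one_pos⟩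
    (fun _ ε => ⟨S' ε - c, by linarith [h1 ε]⟩) k
  have he : ∀ k, (e (k+1)).1 = S' (e k) - c := fun k => rfl
  have hstep : ∀ k, S (e (k+1)) ≤ S' (e k) := by
    intro k; have := h3 (e (k+1)); rw [he] at this; linarith
  have hanti : Antitone (fun k => S' (e k)) := antitone_nat_of_succ_le fun k =>
    (h2 (e (k+1))).le.trans (hstep k)
  obtain ⟨K, hK⟩ := exists_nat_gt ((|g (fun _ => 0)| + (hk0 g).toReal) / η)
  rw [div_lt_iff₀ hη] at hK
  have := strips g hg j K (fun k => S (e k)) (fun k => S' (e k)) (fun k => Z (e k))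
    (fun k => ⟨by linarith [h1 (e k), h2 (e k)], h4 _⟩)
    (fun k => ⟨by linarith [h1 (e k)], by linarith [h2 (e k), h4 (e k)]⟩) (fun k => h5 _)
    (fun k => (h2 _).le) (by
      intro k k' hk
      obtain ⟨m, rfl⟩ : ∃ m, k' = m + 1 := ⟨k' - 1, by omega⟩
      exact (hstep m).trans (hanti (by omega)))
  have h7 : (K : ℝ) * η ≤ ∑ k ∈ Finset.range K,
      |g (Function.update (Z (e k)) j (S (e k))) - g (Function.update (Z (e k)) j (S' (e k)))| := by
    have := Finset.card_nsmul_le_sum (Finset.range K) (fun k =>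
      |g (Function.update (Z (e k)) j (S (e k))) - g (Function.update (Z (e k)) j (S' (e k)))|) η
      (fun k _ => (h6 _).le)
    simpa using this
  linarith

lemma joint_right (g : (ι → ℝ) → ℝ) (hg : hk0 g ≠ ⊤) (hrc : RC g) (x : ι → ℝ)
    (hx : ∀ k, x k ∈ Set.Icc (0 : ℝ) 1) (η : ℝ) (hη : 0 < η) :
    ∃ ε > 0, ∀ y : ι → ℝ, (∀ k, x k ≤ y k) → (∀ k, y k ≤ x k + ε) → (∀ k, y k ≤ 1) →
      |g y - g x| ≤ η := by
  set η' := η / (Fintype.card ι + 1) with hη'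
  have hη'pos : 0 < η' := by positivity
  choose e he hE using fun j => unif_right g hg hrc j (x j) (hx j).1 η' hη'pos
  have : ∀ᶠ ε in nhdsWithin (0:ℝ) (Set.Ioi 0), ∀ j, ε ≤ e j :=
    Filter.eventually_all.2 fun j => Filter.mem_of_superset (Ioc_mem_nhdsGT (he j)) fun r hr => hr.2
  obtain ⟨ε, hε, hεpos⟩ := (this.and self_mem_nhdsWithin).exists
  refine ⟨ε, hεpos, fun y hxy hyx hy1 => ?_⟩
  have key : ∀ s : Finset ι, |g (s.piecewise y x) - g x| ≤ s.card * η' := by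
    intro s
    induction s using Finset.induction_on with
    | empty => simp
    | insert j s hj ih =>
      rw [Finset.piecewise_insert, Finset.card_insert_of_notMem hj]
      have hmem : ∀ k, s.piecewise y x k ∈ Set.Icc (0:ℝ) 1 := by
        intro k
        by_cases hk : k ∈ s
        · simp only [Finset.piecewise_eq_of_mem _ _ _ hk]; exact ⟨(hx k).1.trans (hxy k), hy1 k⟩
        · simp only [Finset.piecewise_eq_of_notMem _ _ _ hk]; exact hx k
      have h1 := hE j (y j) (hxy j) ((hyx j).trans (by linarith [hε j])) (hy1 j) _ hmem
      have h2 : Function.update (s.piecewise y x) j (x j) = s.piecewise y x := by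
        rw [Function.update_eq_self_iff, Finset.piecewise_eq_of_notMem _ _ _ hj]
      rw [h2] at h1
      push_cast
      have := abs_sub_le (g (Function.update (s.piecewise y x) j (y j))) (g (s.piecewise y x)) (g x)
      linarith
  have := key Finset.univ
  rw [Finset.piecewise_univ] at this
  refine this.trans ?_
  rw [hη', Finset.card_univ, ← mul_div_assoc, div_le_iff₀ (by positivity)]
  nlinarith

end C

section D
variable {ι : Type*} [Fintype ι] [DecidableEq ι]
set_option linter.unusedSectionVars false

lemma tele (F : ℕ → ℝ) (M a : ℕ) (ha : a ≤ M) :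
    ∑ i ∈ Finset.range M, (F i - F (i+1)) * (if a ≤ i then 1 else 0) = F a - F M := by
  induction M with
  | zero => obtain rfl : a = 0 := by omega
            simp
  | succ M ih =>
    rw [Finset.sum_range_succ]
    rcases Nat.lt_or_ge M a with h | h
    · obtain rfl : a = M + 1 := by omega
      rw [Finset.sum_eq_zero]
      · simp
      · intro i hi
        rw [Finset.mem_range] at hi
        rw [if_neg (by omega), mul_zero]
    · rw [ih h, if_pos h]; ring

lemma avg_abs {M : ℕ} (w : (ι → Fin M) → ℝ) (G : (ι → Fin M) → ℝ)
    (hG : ∀ y, G y = ∑ a, w a * (if ∀ k, a k ≤ y k then 1 else 0)) (p : ι → Fin M → ℝ)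
    (p0 : ∀ j i, 0 ≤ p j i) (p1 : ∀ j, ∑ i, p j i = 1) (c η : ℝ)
    (h : ∀ y, (∀ j, p j (y j) ≠ 0) → |G y - c| ≤ η) :
    |∑ a, w a * ∏ j, ∑ i, p j i * (if a j ≤ i then 1 else 0) - c| ≤ η := by
  have e1 : ∑ a, w a * ∏ j, ∑ i, p j i * (if a j ≤ i then 1 else 0) =
      ∑ y : ι → Fin M, (∏ j, p j (y j)) * G y := by
    simp_rw [hG, Finset.mul_sum]
    rw [Finset.sum_comm]
    refine Finset.sum_congr rfl fun a _ => ?_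
    rw [Finset.prod_univ_sum, Fintype.piFinset_univ, Finset.mul_sum]
    refine Finset.sum_congr rfl fun y _ => ?_
    rw [Finset.prod_mul_distrib, Fintype.prod_boole]
    ring
  have e2 : ∑ y : ι → Fin M, (∏ j, p j (y j)) = 1 := by
    rw [← Fintype.piFinset_univ, ← Finset.prod_univ_sum]
    simp [p1]
  have e3 : ∑ y : ι → Fin M, (∏ j, p j (y j)) * G y - c =
      ∑ y : ι → Fin M, (∏ j, p j (y j)) * (G y - c) := by
    simp_rw [mul_sub]
    rw [Finset.sum_sub_distrib, ← Finset.sum_mul, e2, one_mul]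
  rw [e1, e3]
  calc _ ≤ ∑ y : ι → Fin M, |(∏ j, p j (y j)) * (G y - c)| := Finset.abs_sum_le_sum_abs _ _
    _ ≤ ∑ y : ι → Fin M, (∏ j, p j (y j)) * η := by
      refine Finset.sum_le_sum fun y _ => ?_
      have h0 : 0 ≤ ∏ j, p j (y j) := Finset.prod_nonneg fun j _ => p0 _ _
      rw [abs_mul, abs_of_nonneg h0]
      by_cases hy : ∀ j, p j (y j) ≠ 0
      · exact mul_le_mul_of_nonneg_left (h y hy) h0
      · push Not at hy
        obtain ⟨j, hj⟩ := hy
        rw [Finset.prod_eq_zero (Finset.mem_univ j) hj]; simp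
    _ = η := by rw [← Finset.sum_mul, e2, one_mul]

noncomputable def phi (c ε t : ℝ) : ℝ := max 0 (min 1 ((c + 2 * ε - t) / ε))

lemma phi_one {c ε t : ℝ} (hε : 0 < ε) (h : t ≤ c + ε) : phi c ε t = 1 := by
  have : 1 ≤ (c + 2 * ε - t) / ε := by rw [le_div_iff₀ hε]; linarith
  simp [phi, this]

lemma phi_zero {c ε t : ℝ} (hε : 0 < ε) (h : c + 2 * ε ≤ t) : phi c ε t = 0 := by
  have : (c + 2 * ε - t) / ε ≤ 0 := div_nonpos_of_nonpos_of_nonneg (by linarith) hε.le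
  rw [phi, max_eq_left]
  exact (min_le_right _ _).trans this

lemma phi_nonneg (c ε t : ℝ) : 0 ≤ phi c ε t := le_max_left _ _
lemma phi_le_one (c ε t : ℝ) : phi c ε t ≤ 1 := max_le zero_le_one (min_le_left _ _)
lemma phi_anti {c ε s t : ℝ} (hε : 0 < ε) (h : s ≤ t) : phi c ε t ≤ phi c ε s := by
  unfold phi; gcongr
lemma phi_cont (c ε : ℝ) : Continuous (phi c ε) := by unfold phi; fun_prop

lemma avg_grid (g : (ι → ℝ) → ℝ) (n : ℕ) (w : (ι → Fin (n+1+1)) → ℝ)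
    (hw : ∀ y : ι → Fin (n+1+1), g (fun k => ((y k : ℕ) : ℝ) / ((n:ℝ) + 1)) =
      ∑ a, w a * (if ∀ k, a k ≤ y k then 1 else 0)) (x : ι → ℝ) (ε η : ℝ) (hε : 0 < ε)
    (hn : 1 / ((n:ℝ) + 1) ≤ ε) (x0 : ∀ k, 0 ≤ x k) (x1 : ∀ k, x k + 2 * ε ≤ 1)
    (h : ∀ y : ι → ℝ, (∀ k, x k ≤ y k) → (∀ k, y k ≤ x k + 2 * ε) → |g y - g x| ≤ η) :
    |∑ a, w a * ∏ j, phi (x j) ε (((a j : ℕ) : ℝ) / ((n:ℝ) + 1)) - g x| ≤ η := by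
  have n0 : (0:ℝ) < n + 1 := by positivity
  let F : ι → ℕ → ℝ := fun j i => phi (x j) ε ((i : ℝ) / ((n:ℝ) + 1))
  let p : ι → Fin (n+1+1) → ℝ := fun j i => F j i - F j (i+1)
  have hlast : ∀ j, F j (n+1+1) = 0 := fun j => phi_zero hε ((x1 j).trans (by
    rw [le_div_iff₀ n0]; push_cast; linarith))
  have hs : ∀ (j : ι) (i : ℕ), ((i+1 : ℕ) : ℝ) / ((n:ℝ)+1) = (i:ℝ) / (n+1) + 1 / (n+1) := by
    intro j i; push_cast; rw [add_div]
  have hsum : ∀ j (a : Fin (n+1+1)), ∑ i, p j i * (if a ≤ i then 1 else 0) = F j a := by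
    intro j a
    have := tele (F j) (n+1+1) a a.2.le
    rw [hlast, sub_zero, ← Fin.sum_univ_eq_sum_range
      (fun i => (F j i - F j (i+1)) * (if (a:ℕ) ≤ i then 1 else 0))] at this
    exact this
  have key := avg_abs w (fun y => g (fun k => ((y k : ℕ) : ℝ) / ((n:ℝ) + 1))) hw p
    (by
      intro j i
      refine sub_nonneg.2 (phi_anti hε ?_)
      rw [hs j]; simp; positivity)
    (by
      intro j
      have := hsum j 0
      simp only [Fin.zero_le, if_true, mul_one] at this
      rw [this]
      exact phi_one hε (by simp; linarith [x0 j])) (g x) η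
    (by
      intro y hy
      refine h _ (fun k => ?_) (fun k => ?_)
      · by_contra! hlt
        refine hy k (sub_eq_zero.2 ?_)
        change phi _ _ _ = phi _ _ _
        rw [phi_one hε (by linarith), phi_one hε (by rw [hs k]; linarith)]
      · by_contra! hlt
        refine hy k (sub_eq_zero.2 ?_)
        change phi _ _ _ = phi _ _ _
        rw [phi_zero hε (by linarith), phi_zero hε (by
          rw [hs k]
          have : 0 < 1 / ((n:ℝ)+1) := by positivity
          linarith)])
  simp_rw [hsum] at key
  exact key

noncomputable def dm {κ E : Type*} [Fintype κ] [MeasurableSpace E] (w : κ → ℝ) (p : κ → E) :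
    FiniteMeasure E :=
  ⟨∑ a, ENNReal.ofReal (w a) • Measure.dirac (p a), ⟨by
    simp [ENNReal.sum_lt_top]⟩⟩

lemma dm_integral {κ E : Type*} [Fintype κ] [MeasurableSpace E] [MeasurableSingletonClass E]
    (w : κ → ℝ) (p : κ → E) (f : E → ℝ) :
    ∫ t, f t ∂(dm w p : Measure E) = ∑ a, max (w a) 0 * f (p a) := by
  change ∫ t, f t ∂(∑ a, ENNReal.ofReal (w a) • Measure.dirac (p a)) = _
  rw [integral_finsetSum_measure]
  · simp [integral_smul_measure, ENNReal.toReal_ofReal']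
  · intro a _
    exact (integrable_dirac (by simp)).smul_measure ENNReal.ofReal_ne_top

lemma dm_mass {κ E : Type*} [Fintype κ] [MeasurableSpace E]
    (w : κ → ℝ) (p : κ → E) (B : NNReal) (h : ∑ a, |w a| ≤ B) : (dm w p).mass ≤ B := by
  rw [← ENNReal.coe_le_coe, FiniteMeasure.ennreal_mass]
  change (∑ a, ENNReal.ofReal (w a) • Measure.dirac (p a)) Set.univ ≤ _
  simp only [Measure.coe_finsetSum, Finset.sum_apply, Measure.smul_apply, measure_univ,
    smul_eq_mul, mul_one]
  calc _ ≤ ∑ a, ENNReal.ofReal |w a| := Finset.sum_le_sum fun a _ =>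
        ENNReal.ofReal_le_ofReal (le_abs_self _)
    _ = ENNReal.ofReal (∑ a, |w a|) := (ENNReal.ofReal_sum_of_nonneg fun _ _ => abs_nonneg _).symm
    _ ≤ ENNReal.ofReal B := ENNReal.ofReal_le_ofReal h
    _ = B := ENNReal.ofReal_coe_nnreal

lemma dm_null {κ E : Type*} [Fintype κ] [MeasurableSpace E] [MeasurableSingletonClass E]
    (w : κ → ℝ) (p : κ → E) (A : Set E) (h : ∀ a, p a ∉ A) : dm w p A = 0 := by
  rw [FiniteMeasure.null_iff_toMeasure_null]
  change (∑ a, ENNReal.ofReal (w a) • Measure.dirac (p a)) A = _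
  simp [h]

end D

section D2
variable {ι : Type*} [Fintype ι] [DecidableEq ι]
set_option linter.unusedSectionVars false
open Filter Topology

noncomputable def tf (x : ι → ℝ) (ε : ℝ) (t : ι → ℝ) : ℝ := ∏ j, phi (x j) ε (t j)

lemma tf_nonneg (x : ι → ℝ) (ε : ℝ) (t : ι → ℝ) : 0 ≤ tf x ε t :=
  Finset.prod_nonneg fun _ _ => phi_nonneg _ _ _
lemma tf_le_one (x : ι → ℝ) (ε : ℝ) (t : ι → ℝ) : tf x ε t ≤ 1 :=
  Finset.prod_le_one (fun _ _ => phi_nonneg _ _ _) fun _ _ => phi_le_one _ _ _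
lemma tf_norm (x : ι → ℝ) (ε : ℝ) (t : ι → ℝ) : ‖tf x ε t‖ ≤ 1 := by
  rw [Real.norm_of_nonneg (tf_nonneg _ _ _)]; exact tf_le_one _ _ _
lemma tf_cont (x : ι → ℝ) (ε : ℝ) : Continuous (tf x ε) := by
  unfold tf
  exact continuous_finsetProd _ fun j _ => (phi_cont _ _).comp (continuous_apply j)

noncomputable def tfb (x : ι → ℝ) (ε : ℝ) : BoundedContinuousFunction (ι → ℝ) ℝ :=
  BoundedContinuousFunction.ofNormedAddCommGroup (tf x ε) (tf_cont x ε) 1 (tf_norm x ε)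

lemma exist_lim (g : (ι → ℝ) → ℝ) (hg : hk0 g ≠ ⊤) :
    ∃ μ₁ μ₂ : FiniteMeasure (ι → ℝ), (μ₁ : Measure (ι → ℝ)) (Set.Icc 0 1)ᶜ = 0 ∧
      (μ₂ : Measure (ι → ℝ)) (Set.Icc 0 1)ᶜ = 0 ∧
      ∀ (x : ι → ℝ) (ε η : ℝ), 0 < ε → (∀ k, 0 ≤ x k) → (∀ k, x k + 2 * ε ≤ 1) →
        (∀ y : ι → ℝ, (∀ k, x k ≤ y k) → (∀ k, y k ≤ x k + 2 * ε) → |g y - g x| ≤ η) →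
        |∫ t, tf x ε t ∂(μ₁ : Measure (ι → ℝ)) - ∫ t, tf x ε t ∂(μ₂ : Measure (ι → ℝ)) - g x| ≤ η := by
  have B0 : 0 ≤ |g (fun _ => 0)| + (hk0 g).toReal := by positivity
  let B : NNReal := ⟨_, B0⟩
  have hgw : ∀ n : ℕ, ∃ w : (ι → Fin (n+1+1)) → ℝ,
      (∀ y : ι → Fin (n+1+1), g (fun k => ((y k : ℕ) : ℝ) / ((n:ℝ) + 1)) =
        ∑ a, w a * (if ∀ k, a k ≤ y k then 1 else 0)) ∧ ∑ a, |w a| ≤ B := fun n =>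
    gridWeights g hg (fun i : Fin (n+1+1) => ((i : ℕ) : ℝ) / ((n:ℝ) + 1))
      (by
        intro i j hij
        have : (i : ℕ) < j := hij
        have h2 : ((i : ℕ) : ℝ) < ((j : ℕ) : ℝ) := by exact_mod_cast this
        have n0 : (0:ℝ) < n + 1 := by positivity
        exact div_lt_div_of_pos_right h2 n0) (by simp) (by
        have n0 : (n : ℝ) + 1 ≠ 0 := by positivity
        simp [n0])
  choose w hw hwB using hgw
  let p : ∀ n : ℕ, (ι → Fin (n+1+1)) → ι → ℝ := fun n a k => ((a k : ℕ) : ℝ) / ((n:ℝ) + 1)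
  have hp : ∀ n a, p n a ∈ Set.Icc (0 : ι → ℝ) 1 := by
    intro n a
    have n0 : (0:ℝ) < n + 1 := by positivity
    refine ⟨fun k => by simp only [p, Pi.zero_apply]; positivity, fun k => ?_⟩
    simp only [p, Pi.one_apply]
    rw [div_le_one n0]
    exact_mod_cast Nat.lt_succ_iff.1 (a k).2
  have hK : IsCompact {μ : FiniteMeasure (ι → ℝ) | μ.mass ≤ B ∧ μ (Set.Icc 0 1)ᶜ = 0} :=
    isCompact_setOfPred_finiteMeasure_le_of_isCompact B isCompact_Icc
  let U : Ultrafilter ℕ := hyperfilter ℕ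
  have hUle : (U : Filter ℕ) ≤ atTop := by
    rw [← Nat.cofinite_eq_atTop]; exact hyperfilter_le_cofinite
  have lim : ∀ v : ∀ n : ℕ, (ι → Fin (n+1+1)) → ℝ, (∀ n, ∑ a, |v n a| ≤ B) →
      ∃ μ : FiniteMeasure (ι → ℝ), (μ : Measure (ι → ℝ)) (Set.Icc 0 1)ᶜ = 0 ∧
        Tendsto (fun n => dm (v n) (p n)) U (𝓝 μ) := by
    intro v hv
    obtain ⟨μ, hμ, hle⟩ := hK.ultrafilter_le_nhds (U.map fun n => dm (v n) (p n)) (by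
      rw [le_principal_iff]
      refine Ultrafilter.mem_map.2 (Filter.univ_mem' fun n => ?_)
      exact ⟨dm_mass _ _ _ (hv n), dm_null _ _ _ fun a => not_not.2 (hp n a)⟩)
    exact ⟨μ, (FiniteMeasure.null_iff_toMeasure_null _ _).1 hμ.2, hle⟩
  obtain ⟨μ₁, h1, l1⟩ := lim w hwB
  obtain ⟨μ₂, h2, l2⟩ := lim (fun n a => - w n a) (by simpa using hwB)
  refine ⟨μ₁, μ₂, h1, h2, fun x ε η hε x0 x1 hxy => ?_⟩
  have t1 := FiniteMeasure.tendsto_iff_forall_integral_tendsto.1 l1 (tfb x ε)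
  have t2 := FiniteMeasure.tendsto_iff_forall_integral_tendsto.1 l2 (tfb x ε)
  have t3 := ((t1.sub t2).sub_const (g x)).abs
  refine le_of_tendsto t3 ?_
  have hev : ∀ᶠ n : ℕ in atTop, 1 / ((n:ℝ) + 1) ≤ ε :=
    (tendsto_one_div_add_atTop_nhds_zero_nat (𝕜 := ℝ)).eventually (ge_mem_nhds hε)
  filter_upwards [hUle hev] with n hn
  rw [dm_integral, dm_integral, ← Finset.sum_sub_distrib]
  have := avg_grid g n (w n) (hw n) x ε η hε hn x0 x1 hxy
  refine le_of_eq_of_le ?_ this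
  congr 2
  refine Finset.sum_congr rfl fun a _ => ?_
  change max (w n a) 0 * tf x ε (p n a) - max (- w n a) 0 * tf x ε (p n a) = _ * tf x ε (p n a)
  rw [← sub_mul]
  congr 1
  rcases le_total (w n a) 0 with h | h
  · rw [max_eq_right h, max_eq_left (by linarith)]; ring
  · rw [max_eq_left h, max_eq_right (by linarith)]; ring

lemma tf_lim (x t : ι → ℝ) :
    Tendsto (fun ε => tf x ε t) (𝓝[>] 0) (𝓝 ((Set.Iic x).indicator (fun _ => (1:ℝ)) t)) := by
  by_cases h : t ∈ Set.Iic x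
  · rw [Set.indicator_of_mem h]
    refine tendsto_const_nhds.congr' ?_
    filter_upwards [self_mem_nhdsWithin] with ε hε
    have hε : 0 < ε := hε
    exact (Finset.prod_eq_one fun j _ => phi_one hε (by have := h j; linarith)).symm
  · rw [Set.indicator_of_notMem h]
    obtain ⟨j, hj⟩ : ∃ j, x j < t j := by
      by_contra! hc; exact h hc
    refine tendsto_const_nhds.congr' ?_
    have : ∀ᶠ ε in 𝓝[>] (0:ℝ), ε ∈ Set.Ioc 0 ((t j - x j)/2) := Ioc_mem_nhdsGT (by linarith)
    filter_upwards [this] with ε hε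
    exact (Finset.prod_eq_zero (Finset.mem_univ j) (phi_zero hε.1 (by linarith [hε.2]))).symm

lemma tf_int (μ : Measure (ι → ℝ)) [IsFiniteMeasure μ] (x : ι → ℝ) :
    Tendsto (fun ε => ∫ t, tf x ε t ∂μ) (𝓝[>] 0) (𝓝 (μ.real (Set.Iic x))) := by
  have : ∫ t, (Set.Iic x).indicator (fun _ => (1:ℝ)) t ∂μ = μ.real (Set.Iic x) := by
    rw [integral_indicator_const _ measurableSet_Iic]; simp
  rw [← this]
  refine tendsto_integral_filter_of_dominated_convergence (fun _ => 1) ?_ ?_ ?_ ?_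
  · exact Eventually.of_forall fun ε => (tf_cont x ε).aestronglyMeasurable
  · exact Eventually.of_forall fun ε => Eventually.of_forall fun t => tf_norm x ε t
  · exact integrable_const _
  · exact Eventually.of_forall fun t => tf_lim x t

lemma Iic_bx (μ : Measure (ι → ℝ)) (hμ : μ (Set.Icc 0 1)ᶜ = 0) (x : ι → ℝ) (hx : ∀ k, x k < 1) :
    μ.real (Set.Iic x) = μ.real (bx x) := by
  apply measureReal_congr
  have : ∀ᵐ t ∂μ, t ∈ Set.Icc (0 : ι → ℝ) 1 := hμ
  filter_upwards [this] with t ht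
  apply propext
  change t ∈ Set.Iic x ↔ t ∈ bx x
  constructor
  · intro h j; exact ⟨ht.1 j, h j, (h j).trans_lt (hx j)⟩
  · intro h j; exact (h j).2.1

lemma exist_int (g : (ι → ℝ) → ℝ) (hg : hk0 g ≠ ⊤) (hrc : RC g) :
    ∃ μ₁ μ₂ : FiniteMeasure (ι → ℝ), 
      ∀ (x : ι → ℝ), (∀ k, 0 ≤ x k) → (∀ k, x k < 1) →
        g x = (μ₁ : Measure (ι → ℝ)).real (bx x) - (μ₂ : Measure (ι → ℝ)).real (bx x) := by
  obtain ⟨μ₁, μ₂, h1, h2, h⟩ := exist_lim g hg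
  refine ⟨μ₁, μ₂, fun x x0 x1 => ?_⟩
  rw [← Iic_bx _ h1 x x1, ← Iic_bx _ h2 x x1]
  have T := ((tf_int (μ₁ : Measure (ι → ℝ)) x).sub (tf_int (μ₂ : Measure (ι → ℝ)) x)).sub_const (g x)
  have T := T.abs
  suffices hs : ∀ η > 0, |(μ₁ : Measure (ι → ℝ)).real (Set.Iic x) -
      (μ₂ : Measure (ι → ℝ)).real (Set.Iic x) - g x| ≤ η by
    have h0 := le_of_forall_pos_le_add (a := |(μ₁ : Measure (ι → ℝ)).real (Set.Iic x) -
      (μ₂ : Measure (ι → ℝ)).real (Set.Iic x) - g x|) (b := 0) (fun η hη => by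
        rw [zero_add]; exact hs η hη)
    have := abs_eq_zero.1 (le_antisymm h0 (abs_nonneg _))
    linarith
  intro η hη
  refine le_of_tendsto T ?_
  obtain ⟨e, he, hE⟩ := joint_right g hg hrc x (fun k => ⟨x0 k, (x1 k).le⟩) η hη
  have a1 : ∀ᶠ ε in 𝓝[>] (0:ℝ), ε ∈ Set.Ioc 0 (e/2) := Ioc_mem_nhdsGT (by linarith)
  have a2 : ∀ᶠ ε in 𝓝[>] (0:ℝ), ∀ k, ε ∈ Set.Ioc 0 ((1 - x k)/2) :=
    Filter.eventually_all.2 fun k => Ioc_mem_nhdsGT (by linarith [x1 k])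
  filter_upwards [a1, a2] with ε e1 e2
  refine h x ε η e1.1 x0 (fun k => by linarith [(e2 k).2]) fun y hy1 hy2 => ?_
  exact hE y hy1 (fun k => by linarith [hy2 k, e1.2]) fun k => by linarith [hy2 k, (e2 k).2]

lemma bx_lim (μ : Measure (ι → ℝ)) [IsFiniteMeasure μ] (x : ι → ℝ) (j : ι) (hj : x j = 1) :
    Tendsto (fun r => μ.real (bx (Function.update x j r))) (𝓝[Set.Ico 0 1] 1)
      (𝓝 (μ.real (bx x))) := by
  have e : ∀ x : ι → ℝ, ∫ t, (bx x).indicator (fun _ => (1:ℝ)) t ∂μ = μ.real (bx x) := by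
    intro x
    rw [integral_indicator_const _ (measurable_bx x)]; simp
  simp_rw [← e]
  refine tendsto_integral_filter_of_dominated_convergence (fun _ => 1) ?_ ?_ ?_ ?_
  · exact Eventually.of_forall fun r =>
      (measurable_const.indicator (measurable_bx _)).aestronglyMeasurable
  · refine Eventually.of_forall fun r => Eventually.of_forall fun t => ?_
    by_cases h : t ∈ bx (Function.update x j r) <;> simp [h]
  · exact integrable_const _
  · refine Eventually.of_forall fun t => ?_
    refine tendsto_const_nhds.congr' ?_
    by_cases h : t j < 1
    · have : ∀ᶠ r in 𝓝[Set.Ico 0 1] (1:ℝ), t j < r := nhdsWithin_le_nhds (lt_mem_nhds h)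
      filter_upwards [this] with r hr
      have : t ∈ bx x ↔ t ∈ bx (Function.update x j r) := by
        refine forall_congr' fun k => ?_
        by_cases hk : k = j
        · subst hk; simp [hr.le, hj, h, h.le]
        · simp [hk]
      by_cases h2 : t ∈ bx x
      · rw [Set.indicator_of_mem h2, Set.indicator_of_mem (this.1 h2)]
      · rw [Set.indicator_of_notMem h2, Set.indicator_of_notMem (fun h => h2 (this.2 h))]
    · have h3 : ∀ x, t ∉ bx x := fun x hx => h (hx j).2.2
      simp [h3]

lemma exist_all (g : (ι → ℝ) → ℝ) (hg : hk0 g ≠ ⊤) (hrc : RC g)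
    (hl : ∀ x : ι → ℝ, (∀ k, x k ∈ Set.Icc (0 : ℝ) 1) → ∀ j, x j = 1 →
        ContinuousWithinAt (fun s => g (Function.update x j s)) (Set.Icc 0 (x j)) (x j)) :
    ∃ μ₁ μ₂ : FiniteMeasure (ι → ℝ), 
      ∀ (x : ι → ℝ), (∀ k, x k ∈ Set.Icc (0:ℝ) 1) →
        g x = (μ₁ : Measure (ι → ℝ)).real (bx x) - (μ₂ : Measure (ι → ℝ)).real (bx x) := by
  obtain ⟨μ₁, μ₂, h⟩ := exist_int g hg hrc
  refine ⟨μ₁, μ₂, ?_⟩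
  have key : ∀ s : Finset ι, ∀ x : ι → ℝ, (∀ k, x k ∈ Set.Icc (0:ℝ) 1) → (∀ k ∉ s, x k < 1) →
      g x = (μ₁ : Measure (ι → ℝ)).real (bx x) - (μ₂ : Measure (ι → ℝ)).real (bx x) := by
    intro s
    induction s using Finset.induction_on with
    | empty => exact fun x hx h1 => h x (fun k => (hx k).1) fun k => h1 k (by simp)
    | insert j s hj ih =>
      intro x hx h1
      rcases (hx j).2.lt_or_eq with hlt | heq
      · refine ih x hx fun k hk => ?_
        by_cases hkj : k = j
        · subst hkj; exact hlt
        · exact h1 k (by simp [hkj, hk])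
      · have c := hl x hx j heq
        have hne : (𝓝[Set.Ico 0 1] (1:ℝ)).NeBot := by
          rw [nhdsWithin_Ico_eq_nhdsLT one_pos]; infer_instance
        have c1 : Tendsto (fun r => g (Function.update x j r)) (𝓝[Set.Ico 0 1] (1:ℝ)) (𝓝 (g x)) := by
          have c' := c.tendsto
          rw [Function.update_eq_self, heq] at c'
          exact c'.mono_left (nhdsWithin_mono _ Set.Ico_subset_Icc_self)
        have c2 := (bx_lim (μ₁ : Measure (ι → ℝ)) x j heq).sub (bx_lim (μ₂ : Measure (ι → ℝ)) x j heq)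
        refine tendsto_nhds_unique_of_eventuallyEq c1 c2 ?_
        filter_upwards [self_mem_nhdsWithin] with r hr
        refine ih _ (update_mem hx j ⟨hr.1, hr.2.le⟩) fun k hk => ?_
        by_cases hkj : k = j
        · subst hkj; simpa using hr.2
        · simpa [hkj] using h1 k (by simp [hkj, hk])
  exact fun x hx => key Finset.univ x hx (by simp)

end D2

/-- (1) A function on `[0,1]^m` of finite HK0 variation which is
coordinate-wise right-continuous, and coordinate-wise left-continuous at boundary
points in each coordinate equal to `1`, is the "CDF" `x ↦ ν([0,x] ∩ [0,1)^m)` of a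
unique finite signed Borel measure `ν` concentrated on `[0,1)^m`.
(2) Conversely any such CDF has finite HK0 variation, equal to `|ν|([0,1)^m \ {0})`. -/
theorem statement15 (m : ℕ) (hm : 1 ≤ m) :
    (∀ g : (Fin m → ℝ) → ℝ,
      hk0 g ≠ ⊤ →
      (∀ x : Fin m → ℝ, (∀ k, x k ∈ Set.Icc (0 : ℝ) 1) → ∀ j,
        ContinuousWithinAt (fun s => g (Function.update x j s))
          (Set.Icc (x j) 1) (x j)) →
      (∀ x : Fin m → ℝ, (∀ k, x k ∈ Set.Icc (0 : ℝ) 1) → ∀ j, x j = 1 →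
        ContinuousWithinAt (fun s => g (Function.update x j s))
          (Set.Icc 0 (x j)) (x j)) →
      ∃! ν : MeasureTheory.SignedMeasure (Fin m → ℝ),
        ν.totalVariation {t : Fin m → ℝ | ∀ j, 0 ≤ t j ∧ t j < 1}ᶜ = 0 ∧
        ∀ x : Fin m → ℝ, (∀ k, x k ∈ Set.Icc (0 : ℝ) 1) →
          g x = ν {t : Fin m → ℝ | ∀ j, 0 ≤ t j ∧ t j ≤ x j ∧ t j < 1}) ∧
    (∀ (g : (Fin m → ℝ) → ℝ) (ν : MeasureTheory.SignedMeasure (Fin m → ℝ)),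
      ν.totalVariation {t : Fin m → ℝ | ∀ j, 0 ≤ t j ∧ t j < 1}ᶜ = 0 →
      (∀ x : Fin m → ℝ, (∀ k, x k ∈ Set.Icc (0 : ℝ) 1) →
        g x = ν {t : Fin m → ℝ | ∀ j, 0 ≤ t j ∧ t j ≤ x j ∧ t j < 1}) →
      hk0 g ≠ ⊤ ∧
        ν.totalVariation
            ({t : Fin m → ℝ | ∀ j, 0 ≤ t j ∧ t j < 1} \ {fun _ => 0}) = hk0 g) := by
  refine ⟨fun g hg hrc hl => ?_, fun g ν _ hgν => ?_⟩
  · obtain ⟨μ₁, μ₂, h⟩ := exist_all g hg hrc hl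
    let Q : Set (Fin m → ℝ) := {t : Fin m → ℝ | ∀ j, 0 ≤ t j ∧ t j < 1}
    have hQ : MeasurableSet Q := measurable_Q
    let ν : SignedMeasure (Fin m → ℝ) := ((μ₁ : Measure (Fin m → ℝ)).restrict Q).toSignedMeasure -
      ((μ₂ : Measure (Fin m → ℝ)).restrict Q).toSignedMeasure
    have hν : ∀ A, MeasurableSet A → ν A = (μ₁ : Measure (Fin m → ℝ)).real (A ∩ Q) -
        (μ₂ : Measure (Fin m → ℝ)).real (A ∩ Q) := by
      intro A hA
      simp only [ν]
      rw [Measure.toSignedMeasure_sub_apply hA, measureReal_restrict_apply hA,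
        measureReal_restrict_apply hA]
    have hν0 : ν.totalVariation Qᶜ = 0 := by
      refine tv_null _ _ hQ.compl fun A hA hAm => ?_
      have : A ∩ Q = ∅ := by
        ext t
        simp only [Set.mem_inter_iff, Set.mem_empty_iff_false, iff_false, not_and]
        exact fun h1 h2 => hA h1 h2
      rw [hν A hAm, this]; simp
    have hνg : ∀ x : Fin m → ℝ, (∀ k, x k ∈ Set.Icc (0 : ℝ) 1) → g x = ν (bx x) := by
      intro x hx
      have : bx x ∩ Q = bx x := by
        refine Set.inter_eq_left.2 fun t ht j => ⟨(ht j).1, (ht j).2.2⟩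
      rw [hν _ (measurable_bx x), this]
      exact h x hx
    refine ⟨ν, ⟨hν0, hνg⟩, ?_⟩
    rintro ν' ⟨h0, hg'⟩
    exact uniq ν' ν h0 hν0 fun x hx => (hg' x hx).symm.trans (hνg x hx)
  · have h2 := part2 g ν hgν
    refine ⟨?_, h2⟩
    rw [← h2]
    have : IsFiniteMeasure ν.totalVariation := by
      unfold SignedMeasure.totalVariation; infer_instance
    exact measure_ne_top _ _
end

section
/- Let d ≥ 1 and let f : ℝ^d → ℝ be a C^∞ function. Then the restriction of f to [0,1]^d admits a MARS representation: there exist a₀ ∈ ℝ and signed measures {ν_S} forming a MARS representation with f(x) = f_{a₀,{ν_S}}(x) for every x ∈ [0,1]^d and with variation V({ν_S}) = Σ_{β∈{0,1,2}^d, max_j β_j = 2} ∫_{T̄^(β)} |f^(β)|, where T̄^(β) = ∏_{k=1}^d T̄_k with T̄_k = [0,1] if β_k = max_j β_j and T̄_k = {0} otherwise, and the integral is the Lebesgue integral over the coordinates k with β_k = max_j β_j of |f^(β)| evaluated with the remaining coordinates set to 0. -/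
open Finset MeasureTheory
open scoped ENNReal

/-- A MARS representation: a constant `a0` together with, for each (nonempty) subset `S`
of coordinates, a finite signed Borel measure on `ℝ^S` concentrated on `Π_{j∈S} [0,1)`. -/
structure MarsRep (d : ℕ) where
  a0 : ℝ
  ν : ∀ S : Finset (Fin d), SignedMeasure ({j // j ∈ S} → ℝ)
  conc : ∀ S : Finset (Fin d),
    (ν S).totalVariation {t : {j // j ∈ S} → ℝ | ∀ j, 0 ≤ t j ∧ t j < 1}ᶜ = 0

/-- Integration of a real function against a finite signed measure. -/
noncomputable def sIntegral {α : Type*} [MeasurableSpace α]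
    (ν : SignedMeasure α) (f : α → ℝ) : ℝ :=
  (∫ t, f t ∂ν.toJordanDecomposition.posPart) -
    (∫ t, f t ∂ν.toJordanDecomposition.negPart)

/-- The function `f_{a₀,{ν_S}}` associated with a MARS representation. -/
noncomputable def marsFun {d : ℕ} (R : MarsRep d) (x : Fin d → ℝ) : ℝ :=
  R.a0 + ∑ S : Finset (Fin d),
    if S.Nonempty then
      sIntegral (R.ν S) fun t => ∏ j : {j // j ∈ S}, max (x j.1 - t j) 0
    else 0

/-- The variation `V({ν_S}) = Σ_{∅ ≠ S} |ν_S|(Π_{j∈S}[0,1) \ {0})` of a MARS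
representation. -/
noncomputable def marsVar {d : ℕ} (R : MarsRep d) : ℝ≥0∞ :=
  ∑ S : Finset (Fin d),
    if S.Nonempty then
      (R.ν S).totalVariation
        ({t : {j // j ∈ S} → ℝ | ∀ j, 0 ≤ t j ∧ t j < 1} \ {fun _ => 0})
    else 0

/-- Partial derivative in the `k`-th coordinate direction. -/
noncomputable def pderiv1 {m : ℕ} (k : Fin m) (g : (Fin m → ℝ) → ℝ) :
    (Fin m → ℝ) → ℝ :=
  fun x => fderiv ℝ g x (Pi.single k 1)

/-- The mixed partial derivative `g^(β)` for a multi-index `β ∈ ℕ^m`. -/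
noncomputable def pderivMulti {m : ℕ} (β : Fin m → ℕ)
    (g : (Fin m → ℝ) → ℝ) : (Fin m → ℝ) → ℝ :=
  (List.finRange m).foldr (fun k h => (pderiv1 k)^[β k] h) g

noncomputable def lam : Measure ℝ := volume.restrict (Set.Icc 0 1)

instance : IsProbabilityMeasure lam := ⟨by simp [lam]⟩

noncomputable def PP (d : ℕ) : Measure (Fin d → ℝ) := Measure.pi (fun _ => lam)

instance (d : ℕ) : IsProbabilityMeasure (PP d) := by unfold PP; infer_instance

lemma PP_eq (d : ℕ) : PP d = volume.restrict (Set.univ.pi fun _ => Set.Icc (0:ℝ) 1) := by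
  unfold PP lam
  rw [volume_pi, Measure.restrict_pi_pi]

lemma integrable_PP {d : ℕ} {G : (Fin d → ℝ) → ℝ} (hG : Continuous G) :
    Integrable G (PP d) := by
  rw [PP_eq]
  exact hG.continuousOn.integrableOn_compact (isCompact_univ_pi fun _ => isCompact_Icc)

lemma ae_PP (d : ℕ) : ∀ᵐ t ∂(PP d), ∀ k, 0 < t k ∧ t k < 1 := by
  have h : ∀ᵐ s ∂lam, 0 < s ∧ s < 1 := by
    unfold lam
    rw [← restrict_Ioo_eq_restrict_Icc]
    exact ae_restrict_mem measurableSet_Ioo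
  rw [ae_all_iff]
  intro k
  exact (measurePreserving_eval (fun _ : Fin d => lam) k).quasiMeasurePreserving.ae h

lemma resample_mp {d : ℕ} (k : Fin d) :
    MeasurePreserving (fun p : (Fin d → ℝ) × ℝ => Function.update p.1 k p.2)
      ((PP d).prod lam) (PP d) := by
  have hm : Measurable (fun p : (Fin d → ℝ) × ℝ => Function.update p.1 k p.2) := by
    rw [measurable_pi_iff]
    intro j
    by_cases h : j = k
    · subst h; simpa using measurable_snd
    · simp only [Function.update_of_ne h]; fun_prop
  refine ⟨hm, ?_⟩
  conv_rhs => rw [PP]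
  symm
  refine Measure.pi_eq fun s hs => ?_
  rw [Measure.map_apply hm (MeasurableSet.univ_pi hs)]
  have : (fun p : (Fin d → ℝ) × ℝ => Function.update p.1 k p.2) ⁻¹' (Set.univ.pi s)
      = (Set.univ.pi (Function.update s k Set.univ)) ×ˢ (s k) := by
    ext ⟨t, u⟩
    simp only [Set.mem_preimage, Set.mem_pi, Set.mem_univ, true_imp_iff, Set.mem_prod]
    constructor
    · intro h
      refine ⟨fun j => ?_, by simpa using h k⟩
      by_cases hj : j = k
      · subst hj; simp
      · simpa [Function.update_of_ne hj] using h j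
    · rintro ⟨h, h2⟩ j
      by_cases hj : j = k
      · subst hj; simpa
      · simpa [Function.update_of_ne hj] using h j
  rw [this, Measure.prod_prod, PP, Measure.pi_pi, ← Finset.mul_prod_erase univ _ (mem_univ k),
    ← Finset.mul_prod_erase univ (fun i => lam (s i)) (mem_univ k), mul_comm]
  simp only [Function.update_self, measure_univ, one_mul]
  congr 1
  refine Finset.prod_congr rfl fun j hj => ?_
  rw [Function.update_of_ne (Finset.ne_of_mem_erase hj)]

lemma resample {d : ℕ} (k : Fin d) {G : (Fin d → ℝ) → ℝ} (hG : Continuous G) :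
    ∫ t, G t ∂(PP d) = ∫ t, ∫ s, G (Function.update t k s) ∂lam ∂(PP d) := by
  have h1 := integrable_PP hG
  have hmp := resample_mp k
  rw [← integral_prod (fun p : (Fin d → ℝ) × ℝ => G (Function.update p.1 k p.2))
    ((hmp.integrable_comp hG.aestronglyMeasurable).2 h1)]
  rw [← hmp.map_eq, integral_map hmp.measurable.aemeasurable hG.aestronglyMeasurable, hmp.map_eq]

lemma integrable_lam {h : ℝ → ℝ} (hh : Continuous h) : Integrable h lam := by
  unfold lam
  exact hh.continuousOn.integrableOn_compact isCompact_Icc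

lemma taylor1 {h h1 h2 : ℝ → ℝ} (hd : ∀ s, HasDerivAt h (h1 s) s)
    (hd1 : ∀ s, HasDerivAt h1 (h2 s) s) (hc : Continuous h2) {x : ℝ} (hx : x ∈ Set.Icc (0:ℝ) 1) :
    h x = h 0 + x * h1 0 + ∫ s, max (x - s) 0 * h2 s ∂lam := by
  have hc1 : Continuous h1 := continuous_iff_continuousAt.2 fun s => (hd1 s).continuousAt
  have e : ∫ s, max (x - s) 0 * h2 s ∂lam = ∫ s in (0:ℝ)..x, (x - s) * h2 s := by
    unfold lam
    rw [integral_Icc_eq_integral_Ioc, ← intervalIntegral.integral_of_le zero_le_one,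
      ← intervalIntegral.integral_add_adjacent_intervals (b := x)]
    · have a : ∫ s in (0:ℝ)..x, max (x - s) 0 * h2 s = ∫ s in (0:ℝ)..x, (x - s) * h2 s := by
        refine intervalIntegral.integral_congr fun s hs => ?_
        rw [Set.uIcc_of_le hx.1] at hs
        rw [max_eq_left (by linarith [hs.2])]
      have b : ∫ s in x..1, max (x - s) 0 * h2 s = ∫ s in x..1, 0 := by
        refine intervalIntegral.integral_congr fun s hs => ?_
        rw [Set.uIcc_of_le hx.2] at hs
        rw [max_eq_right (by linarith [hs.1]), zero_mul]
      rw [a, b]; simp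
    · exact (by fun_prop : Continuous fun s => max (x - s) 0 * h2 s).intervalIntegrable _ _
    · exact (by fun_prop : Continuous fun s => max (x - s) 0 * h2 s).intervalIntegrable _ _
  rw [e, intervalIntegral.integral_mul_deriv_eq_deriv_mul (u := fun s => x - s) (u' := fun _ => -1)
    (v := h1) (v' := h2)]
  · have : ∫ s in (0:ℝ)..x, h1 s = h x - h 0 :=
      intervalIntegral.integral_eq_sub_of_hasDerivAt (fun s _ => hd s) (hc1.intervalIntegrable _ _)
    simp only [neg_mul, one_mul, intervalIntegral.integral_neg, this]
    ring
  · intro s _; simpa using (hasDerivAt_id s).const_sub x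
  · intro s _; exact hd1 s
  · exact intervalIntegrable_const
  · exact hc.intervalIntegrable _ _

lemma contDiff_pderiv1 {m : ℕ} (k : Fin m) {g : (Fin m → ℝ) → ℝ}
    (hg : ContDiff ℝ (⊤ : ℕ∞) g) : ContDiff ℝ (⊤ : ℕ∞) (pderiv1 k g) := by
  unfold pderiv1
  exact (hg.fderiv_right (m := (⊤ : ℕ∞)) (by simp)).clm_apply contDiff_const

lemma hasDerivAt_pderiv1 {m : ℕ} (k : Fin m) {g : (Fin m → ℝ) → ℝ}
    (hg : ContDiff ℝ (⊤ : ℕ∞) g) (z : Fin m → ℝ) (s : ℝ) :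
    HasDerivAt (fun s => g (Function.update z k s)) (pderiv1 k g (Function.update z k s)) s := by
  have h1 : HasFDerivAt g (fderiv ℝ g (Function.update z k s)) (Function.update z k s) :=
    (hg.differentiable (by simp) _).hasFDerivAt
  exact h1.comp_hasDerivAt s (hasDerivAt_update z k s)

noncomputable def ww (i : ℕ) (x t : ℝ) : ℝ :=
  if i = 2 then max (x - t) 0 else if i = 1 then x else 1

noncomputable def cc (i : ℕ) (t : ℝ) : ℝ := if i = 2 then t else 0

lemma continuous_ww (i : ℕ) (x : ℝ) : Continuous (ww i x) := by
  unfold ww; split_ifs <;> fun_prop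

lemma continuous_cc (i : ℕ) : Continuous (cc i) := by
  unfold cc; split_ifs <;> fun_prop

lemma taylorK {m : ℕ} (k : Fin m) {g : (Fin m → ℝ) → ℝ}
    (hg : ContDiff ℝ (⊤ : ℕ∞) g) (z : Fin m → ℝ) (hz : z k ∈ Set.Icc (0:ℝ) 1) :
    g z = ∑ i ∈ range 3, ∫ s, ww i (z k) s * ((pderiv1 k)^[i] g) (Function.update z k (cc i s)) ∂lam := by
  have h1 := contDiff_pderiv1 k hg
  have h2 := contDiff_pderiv1 k h1
  have := taylor1 (hasDerivAt_pderiv1 k hg z) (hasDerivAt_pderiv1 k h1 z)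
    (h2.continuous.comp (by fun_prop : Continuous fun s : ℝ => Function.update z k s)) hz
  rw [Function.update_eq_self] at this
  rw [this]
  simp [Finset.sum_range_succ, ww, cc]

noncomputable def DD {m : ℕ} (l : List (Fin m)) (β : Fin m → ℕ) (g : (Fin m → ℝ) → ℝ) :
    (Fin m → ℝ) → ℝ := l.foldr (fun k h => (pderiv1 k)^[β k] h) g

lemma contDiff_iter {m : ℕ} (k : Fin m) (n : ℕ) {g : (Fin m → ℝ) → ℝ}
    (hg : ContDiff ℝ (⊤ : ℕ∞) g) : ContDiff ℝ (⊤ : ℕ∞) ((pderiv1 k)^[n] g) := by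
  induction n with
  | zero => simpa
  | succ n ih => rw [Function.iterate_succ_apply']; exact contDiff_pderiv1 k ih

lemma contDiff_DD {m : ℕ} (l : List (Fin m)) (β : Fin m → ℕ) {g : (Fin m → ℝ) → ℝ}
    (hg : ContDiff ℝ (⊤ : ℕ∞) g) : ContDiff ℝ (⊤ : ℕ∞) (DD l β g) := by
  induction l with
  | nil => simpa [DD]
  | cons k l ih => exact contDiff_iter k _ ih

lemma DD_congr {m : ℕ} (l : List (Fin m)) {β β' : Fin m → ℕ} (h : ∀ k ∈ l, β k = β' k)
    (g : (Fin m → ℝ) → ℝ) : DD l β g = DD l β' g := by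
  induction l with
  | nil => rfl
  | cons k l ih =>
    have := ih (fun j hj => h j (List.mem_cons_of_mem _ hj))
    simp only [DD, List.foldr_cons] at this ⊢
    rw [this, h k List.mem_cons_self]

def BB {m : ℕ} (l : List (Fin m)) : Finset (Fin m → ℕ) :=
  Fintype.piFinset fun k => if k ∈ l then range 3 else {0}

lemma mem_BB {m : ℕ} {l : List (Fin m)} {β : Fin m → ℕ} :
    β ∈ BB l ↔ ∀ k, if k ∈ l then β k < 3 else β k = 0 := by
  unfold BB
  rw [Fintype.mem_piFinset]
  refine forall_congr' fun k => ?_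
  split_ifs <;> simp

lemma sum_BB_cons {m : ℕ} {l : List (Fin m)} {k : Fin m} (hk : k ∉ l) (F : (Fin m → ℕ) → ℝ) :
    ∑ β ∈ BB (k :: l), F β = ∑ β ∈ BB l, ∑ i ∈ range 3, F (Function.update β k i) := by
  rw [← Finset.sum_product']
  symm
  refine Finset.sum_nbij' (fun p => Function.update p.1 k p.2)
    (fun β => (Function.update β k 0, β k)) ?_ ?_ ?_ ?_ ?_
  · rintro ⟨β, i⟩ h
    simp only [Finset.mem_product, mem_BB, Finset.mem_range] at h ⊢
    intro j
    have := h.1 j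
    by_cases hj : j = k
    · subst hj; simpa using h.2
    · simpa [hj] using this
  · intro β h
    simp only [Finset.mem_product, mem_BB, Finset.mem_range] at h ⊢
    refine ⟨fun j => ?_, by simpa using h k⟩
    have := h j
    by_cases hj : j = k
    · subst hj; simp [hk]
    · simpa [hj] using this
  · rintro ⟨β, i⟩ h
    simp only [Finset.mem_product, mem_BB, Finset.mem_range] at h
    have := h.1 k
    simp only [hk, if_false] at this
    simp [this.symm]
  · intro β h
    simp
  · rintro ⟨β, i⟩ h; rfl

noncomputable def zz {m : ℕ} (l : List (Fin m)) (β : Fin m → ℕ) (x t : Fin m → ℝ) : Fin m → ℝ :=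
  fun j => if j ∈ l then cc (β j) (t j) else x j

lemma continuous_zz {m : ℕ} (l : List (Fin m)) (β : Fin m → ℕ) (x : Fin m → ℝ) :
    Continuous (zz l β x) := by
  unfold zz
  refine continuous_pi fun j => ?_
  split_ifs
  · exact (continuous_cc _).comp (continuous_apply j)
  · fun_prop

lemma continuous_term {m : ℕ} {f : (Fin m → ℝ) → ℝ} (hf : ContDiff ℝ (⊤ : ℕ∞) f)
    (l : List (Fin m)) (β : Fin m → ℕ) (x : Fin m → ℝ) :
    Continuous fun t => (∏ j, ww (β j) (x j) (t j)) * DD l β f (zz l β x t) := by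
  refine Continuous.mul ?_ ((contDiff_DD l β hf).continuous.comp (continuous_zz l β x))
  exact continuous_finsetProd _ fun j _ => (continuous_ww _ _).comp (continuous_apply j)

lemma expand {m : ℕ} {f : (Fin m → ℝ) → ℝ} (hf : ContDiff ℝ (⊤ : ℕ∞) f)
    (x : Fin m → ℝ) (hx : ∀ k, x k ∈ Set.Icc (0 : ℝ) 1) (l : List (Fin m)) (hl : l.Nodup) :
    f x = ∑ β ∈ BB l, ∫ t, (∏ j, ww (β j) (x j) (t j)) * DD l β f (zz l β x t) ∂(PP m) := by
  induction l with
  | nil =>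
    have : BB ([] : List (Fin m)) = {fun _ => 0} := by
      ext β; simp [mem_BB, funext_iff]
    rw [this]
    have hz : ∀ t, zz [] (fun _ => 0) x t = x := fun t => by ext j; simp [zz]
    simp [hz, DD, ww]
  | cons k l ih =>
    have hk : k ∉ l := (List.nodup_cons.1 hl).1
    rw [ih (List.nodup_cons.1 hl).2, sum_BB_cons hk]
    refine Finset.sum_congr rfl fun β hβ => ?_
    have hβk : β k = 0 := by have := mem_BB.1 hβ k; simpa [hk] using this
    simp_rw [fun i => resample k (continuous_term hf (k :: l) (Function.update β k i) x)]
    have key : ∀ i s t, (∏ j, ww (Function.update β k i j) (x j) (Function.update t k s j)) *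
        DD (k :: l) (Function.update β k i) f
          (zz (k :: l) (Function.update β k i) x (Function.update t k s)) =
        (∏ j, ww (β j) (x j) (t j)) * (ww i (x k) s *
          ((pderiv1 k)^[i] (DD l β f)) (Function.update (zz l β x t) k (cc i s))) := by
      intro i s t
      have e1 : (∏ j, ww (Function.update β k i j) (x j) (Function.update t k s j)) =
          (∏ j, ww (β j) (x j) (t j)) * ww i (x k) s := by
        rw [← Finset.mul_prod_erase univ _ (mem_univ k),
          ← Finset.mul_prod_erase univ (fun j => ww (β j) (x j) (t j)) (mem_univ k), mul_comm,
          hβk]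
        simp only [Function.update_self]
        have : ww 0 (x k) (t k) = 1 := by simp [ww]
        rw [this, one_mul]
        congr 1
        refine Finset.prod_congr rfl fun j hj => ?_
        have hj := Finset.ne_of_mem_erase hj
        rw [Function.update_of_ne hj, Function.update_of_ne hj]
      have e2 : DD (k :: l) (Function.update β k i) f = (pderiv1 k)^[i] (DD l β f) := by
        have : DD l (Function.update β k i) f = DD l β f := DD_congr l (fun j hj => by
          rw [Function.update_of_ne]; rintro rfl; exact hk hj) f
        rw [← this]
        simp [DD]
      have e3 : zz (k :: l) (Function.update β k i) x (Function.update t k s) =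
          Function.update (zz l β x t) k (cc i s) := by
        ext j
        by_cases hj : j = k
        · subst hj; simp [zz]
        · simp [zz, hj]
      rw [e1, e2, e3, mul_assoc]
    simp_rw [key, integral_const_mul]
    rw [← integral_finsetSum]
    · refine integral_congr_ae (Filter.Eventually.of_forall fun t => ?_)
      simp only
      rw [← Finset.mul_sum]
      congr 1
      have hzk : zz l β x t k = x k := by simp [zz, hk]
      rw [taylorK k (contDiff_DD l β hf) (zz l β x t) (by rw [hzk]; exact hx k), hzk]
    · intro i _
      have hi := (resample_mp k).integrable_comp_of_integrable
        (integrable_PP (continuous_term hf (k :: l) (Function.update β k i) x))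
      have := hi.integral_prod_left
      simpa only [Function.comp_def, key, integral_const_mul] using this

lemma jordan_wd {α : Type*} [MeasurableSpace α] {μ : Measure α} {g : α → ℝ}
    (hg : Measurable g) (hi : Integrable g μ) :
    (SignedMeasure.toJordanDecomposition (μ.withDensityᵥ g)).posPart
        = μ.withDensity (fun x => ENNReal.ofReal (g x)) ∧
    (SignedMeasure.toJordanDecomposition (μ.withDensityᵥ g)).negPart
        = μ.withDensity (fun x => ENNReal.ofReal (-g x)) := by
  have := SignedMeasure.toJordanDecomposition_eq_of_eq_add_withDensity (μ := μ) (t := 0)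
    (s := μ.withDensityᵥ g) hg hi VectorMeasure.MutuallySingular.zero_left (by simp)
  rw [this]
  simp [SignedMeasure.toJordanDecomposition_zero]

lemma tv_wd {α : Type*} [MeasurableSpace α] {μ : Measure α} {g : α → ℝ}
    (hg : Measurable g) (hi : Integrable g μ) {A : Set α} (hA : MeasurableSet A) :
    SignedMeasure.totalVariation (μ.withDensityᵥ g) A = ∫⁻ x, A.indicator (fun x => ENNReal.ofReal |g x|) x ∂μ := by
  rw [SignedMeasure.totalVariation, (jordan_wd hg hi).1, (jordan_wd hg hi).2,
    Measure.add_apply, withDensity_apply _ hA, withDensity_apply _ hA,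
    ← lintegral_add_left (by fun_prop), lintegral_indicator hA]
  refine lintegral_congr fun x => ?_
  rcases le_total 0 (g x) with h | h
  · rw [abs_of_nonneg h, ENNReal.ofReal_of_nonpos (by linarith : -g x ≤ 0), add_zero]
  · rw [abs_of_nonpos h, ENNReal.ofReal_of_nonpos h, zero_add]

lemma sInt_wd {α : Type*} [MeasurableSpace α] {μ : Measure α} {g : α → ℝ}
    (hg : Measurable g) (hi : Integrable g μ) (h : α → ℝ) (hm : Measurable h)
    (hgh : Integrable (fun x => h x * g x) μ) :
    sIntegral (μ.withDensityᵥ g) h = ∫ x, h x * g x ∂μ := by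
  rw [sIntegral, (jordan_wd hg hi).1, (jordan_wd hg hi).2,
    integral_withDensity_eq_integral_toReal_smul (by fun_prop) (by simp),
    integral_withDensity_eq_integral_toReal_smul (by fun_prop) (by simp), ← integral_sub]
  · refine integral_congr_ae (Filter.Eventually.of_forall fun x => ?_)
    simp only [smul_eq_mul, ENNReal.toReal_ofReal']
    rcases le_total 0 (g x) with h | h
    · rw [max_eq_left h, max_eq_right (by linarith)]; ring
    · rw [max_eq_right h, max_eq_left (by linarith)]; ring
  · refine hgh.mono (by fun_prop) (Filter.Eventually.of_forall fun x => ?_)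
    simp only [smul_eq_mul, ENNReal.toReal_ofReal', norm_mul, Real.norm_eq_abs]
    rw [mul_comm]
    refine mul_le_mul_of_nonneg_left ?_ (abs_nonneg _)
    rw [abs_of_nonneg (le_max_right _ _)]
    exact max_le (le_abs_self _) (abs_nonneg _)
  · refine hgh.mono (by fun_prop) (Filter.Eventually.of_forall fun x => ?_)
    simp only [smul_eq_mul, ENNReal.toReal_ofReal', norm_mul, Real.norm_eq_abs]
    rw [mul_comm]
    refine mul_le_mul_of_nonneg_left ?_ (abs_nonneg _)
    rw [abs_of_nonneg (le_max_right _ _)]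
    exact max_le (neg_le_abs _) (abs_nonneg _)

def BA (d : ℕ) : Finset (Fin d → ℕ) := Fintype.piFinset fun _ : Fin d => Finset.range 3

def sp {d : ℕ} (β : Fin d → ℕ) : Finset (Fin d) := univ.filter fun k => β k ≠ 0

noncomputable def emb {d : ℕ} (S : Finset (Fin d)) (β : Fin d → ℕ) (t : Fin d → ℝ) :
    {j // j ∈ S} → ℝ := fun j => cc (β j) (t j)

noncomputable def msk {d : ℕ} (β : Fin d → ℕ) (t : Fin d → ℝ) : Fin d → ℝ :=
  fun j => cc (β j) (t j)

noncomputable def extS {d : ℕ} (S : Finset (Fin d)) (u : {j // j ∈ S} → ℝ) : Fin d → ℝ :=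
  fun k => if h : k ∈ S then u ⟨k, h⟩ else 0

noncomputable def betS {d : ℕ} (S : Finset (Fin d)) (u : {j // j ∈ S} → ℝ) : Fin d → ℕ :=
  fun k => if h : k ∈ S then (if u ⟨k, h⟩ = 0 then 1 else 2) else 0

noncomputable def gS {d : ℕ} (f : (Fin d → ℝ) → ℝ) (S : Finset (Fin d))
    (u : {j // j ∈ S} → ℝ) : ℝ := pderivMulti (betS S u) f (extS S u)

noncomputable def muS {d : ℕ} (S : Finset (Fin d)) : Measure ({j // j ∈ S} → ℝ) :=
  ∑ β ∈ (BA d).filter (fun β => sp β = S), (PP d).map (emb S β)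

lemma continuous_emb {d : ℕ} (S : Finset (Fin d)) (β : Fin d → ℕ) : Continuous (emb S β) :=
  continuous_pi fun j => (continuous_cc _).comp (continuous_apply j.1)

lemma continuous_msk {d : ℕ} (β : Fin d → ℕ) : Continuous (msk β) :=
  continuous_pi fun j => (continuous_cc _).comp (continuous_apply j)

lemma contDiff_pm {d : ℕ} {f : (Fin d → ℝ) → ℝ} (hf : ContDiff ℝ (⊤ : ℕ∞) f) (β : Fin d → ℕ) :
    ContDiff ℝ (⊤ : ℕ∞) (pderivMulti β f) := contDiff_DD (List.finRange d) β hf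

lemma measurable_gS {d : ℕ} {f : (Fin d → ℝ) → ℝ} (hf : ContDiff ℝ (⊤ : ℕ∞) f)
    (S : Finset (Fin d)) : Measurable (gS f S) := by
  have h1 : Measurable (fun p : (Fin d → ℕ) × (Fin d → ℝ) => pderivMulti p.1 f p.2) :=
    measurable_from_prod_countable_right fun β => (contDiff_pm hf β).continuous.measurable
  have h2 : Measurable (betS S) := by
    refine measurable_pi_iff.2 fun k => ?_
    unfold betS
    by_cases h : k ∈ S
    · simp only [h, dite_true]
      exact Measurable.ite ((measurable_pi_apply _) (measurableSet_singleton 0))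
        measurable_const measurable_const
    · simp [h]
  have h3 : Measurable (extS S) := by
    refine measurable_pi_iff.2 fun k => ?_
    unfold extS
    by_cases h : k ∈ S
    · simp only [h, dite_true]
      exact measurable_pi_apply _
    · simp [h]
  exact h1.comp (h2.prodMk h3)

lemma gS_emb {d : ℕ} (f : (Fin d → ℝ) → ℝ) {β : Fin d → ℕ} (hβ : β ∈ BA d)
    {t : Fin d → ℝ} (ht : ∀ k, 0 < t k ∧ t k < 1) :
    gS f (sp β) (emb (sp β) β t) = pderivMulti β f (msk β t) := by
  have hb : ∀ k, β k < 3 := by simpa [BA] using hβ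
  have e1 : betS (sp β) (emb (sp β) β t) = β := by
    ext k
    have := hb k
    have := (ht k).1.ne'
    unfold betS emb sp cc
    by_cases h : β k = 0
    · simp [h]
    · by_cases h2 : β k = 2
      · simp [h2, this]
      · have : β k = 1 := by omega
        simp [this]
  have e2 : extS (sp β) (emb (sp β) β t) = msk β t := by
    ext k
    unfold extS emb sp msk cc
    by_cases h : β k = 0
    · simp [h]
    · simp [h]
  rw [gS, e1, e2]

lemma integrable_muS {d : ℕ} {S : Finset (Fin d)} {h : ({j // j ∈ S} → ℝ) → ℝ}
    (hm : Measurable h)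
    (H : ∀ β ∈ BA d, sp β = S → Integrable (fun t => h (emb S β t)) (PP d)) :
    Integrable h (muS S) := by
  unfold muS
  rw [integrable_finsetSum_measure]
  intro β hβ
  rw [Finset.mem_filter] at hβ
  rw [integrable_map_measure hm.aestronglyMeasurable (continuous_emb S β).measurable.aemeasurable]
  exact H β hβ.1 hβ.2

lemma integral_muS {d : ℕ} {S : Finset (Fin d)} {h : ({j // j ∈ S} → ℝ) → ℝ}
    (hm : Measurable h)
    (H : ∀ β ∈ BA d, sp β = S → Integrable (fun t => h (emb S β t)) (PP d)) :
    ∫ u, h u ∂(muS S) = ∑ β ∈ (BA d).filter (fun β => sp β = S), ∫ t, h (emb S β t) ∂(PP d) := by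
  unfold muS
  rw [integral_finsetSum_measure]
  · refine Finset.sum_congr rfl fun β _ => ?_
    rw [integral_map (continuous_emb S β).measurable.aemeasurable hm.aestronglyMeasurable]
  · intro β hβ
    rw [Finset.mem_filter] at hβ
    rw [integrable_map_measure hm.aestronglyMeasurable (continuous_emb S β).measurable.aemeasurable]
    exact H β hβ.1 hβ.2

lemma lintegral_muS {d : ℕ} {S : Finset (Fin d)} {h : ({j // j ∈ S} → ℝ) → ℝ≥0∞}
    (hm : Measurable h) :
    ∫⁻ u, h u ∂(muS S) = ∑ β ∈ (BA d).filter (fun β => sp β = S), ∫⁻ t, h (emb S β t) ∂(PP d) := by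
  unfold muS
  rw [lintegral_finsetSum_measure]
  refine Finset.sum_congr rfl fun β _ => ?_
  rw [lintegral_map hm (continuous_emb S β).measurable]

lemma integrable_gS {d : ℕ} {f : (Fin d → ℝ) → ℝ} (hf : ContDiff ℝ (⊤ : ℕ∞) f)
    (S : Finset (Fin d)) : Integrable (gS f S) (muS S) := by
  refine integrable_muS (measurable_gS hf S) ?_
  rintro β hβ rfl
  refine (integrable_PP ((contDiff_pm hf β).continuous.comp (continuous_msk β))).congr ?_
  filter_upwards [ae_PP d] with t ht
  rw [gS_emb f hβ ht]; rfl

lemma measurableSet_bx {d : ℕ} (S : Finset (Fin d)) :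
    MeasurableSet {t : {j // j ∈ S} → ℝ | ∀ j, 0 ≤ t j ∧ t j < 1} := by
  have : {t : {j // j ∈ S} → ℝ | ∀ j, 0 ≤ t j ∧ t j < 1} = Set.univ.pi fun _ => Set.Ico 0 1 := by
    ext t; simp
  rw [this]
  exact MeasurableSet.univ_pi fun _ => measurableSet_Ico

lemma emb_mem {d : ℕ} (S : Finset (Fin d)) (β : Fin d → ℕ)
    {t : Fin d → ℝ} (ht : ∀ k, 0 < t k ∧ t k < 1) :
    emb S β t ∈ {t : {j // j ∈ S} → ℝ | ∀ j, 0 ≤ t j ∧ t j < 1} := by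
  intro j
  unfold emb cc
  split_ifs
  · exact ⟨(ht j).1.le, (ht j).2⟩
  · norm_num

noncomputable def RR {d : ℕ} {f : (Fin d → ℝ) → ℝ} (hf : ContDiff ℝ (⊤ : ℕ∞) f) : MarsRep d where
  a0 := f 0
  ν S := (muS S).withDensityᵥ (gS f S)
  conc S := by
    rw [tv_wd (measurable_gS hf S) (integrable_gS hf S) (measurableSet_bx S).compl,
      lintegral_muS (Measurable.indicator (by have := measurable_gS hf S; fun_prop) (measurableSet_bx S).compl)]
    refine Finset.sum_eq_zero fun β _ => ?_
    rw [← lintegral_zero (μ := PP d)]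
    refine lintegral_congr_ae ?_
    filter_upwards [ae_PP d] with t ht
    rw [Set.indicator_of_notMem]
    exact fun h => h (emb_mem S β ht)

lemma prod_ww {d : ℕ} {β : Fin d → ℕ} (hβ : β ∈ BA d) (x : Fin d → ℝ)
    (hx : ∀ k, x k ∈ Set.Icc (0 : ℝ) 1) (t : Fin d → ℝ) :
    ∏ j : {j // j ∈ sp β}, max (x j.1 - emb (sp β) β t j) 0 = ∏ j, ww (β j) (x j) (t j) := by
  have hb : ∀ k, β k < 3 := by simpa [BA] using hβ
  have : ∀ j : {j // j ∈ sp β}, max (x j.1 - emb (sp β) β t j) 0 = ww (β j) (x j) (t j) := by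
    rintro ⟨j, hj⟩
    have := hb j
    have h0 : β j ≠ 0 := by simpa [sp] using hj
    unfold emb cc ww
    by_cases h : β j = 2
    · simp [h]
    · have : β j = 1 := by omega
      simp [this, (hx j).1]
  simp_rw [this]
  rw [Finset.prod_coe_sort (sp β) (fun j => ww (β j) (x j) (t j))]
  refine Finset.prod_subset (Finset.subset_univ _) fun j _ hj => ?_
  have h0 : β j = 0 := by simpa [sp] using hj
  simp [ww, h0]

lemma sInt_RR {d : ℕ} {f : (Fin d → ℝ) → ℝ} (hf : ContDiff ℝ (⊤ : ℕ∞) f) (x : Fin d → ℝ)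
    (hx : ∀ k, x k ∈ Set.Icc (0 : ℝ) 1) (S : Finset (Fin d)) :
    sIntegral ((RR hf).ν S) (fun t => ∏ j : {j // j ∈ S}, max (x j.1 - t j) 0) =
      ∑ β ∈ (BA d).filter (fun β => sp β = S),
        ∫ t, (∏ j, ww (β j) (x j) (t j)) * pderivMulti β f (msk β t) ∂(PP d) := by
  have hh : Measurable (fun t : {j // j ∈ S} → ℝ => ∏ j : {j // j ∈ S}, max (x j.1 - t j) 0) := by
    fun_prop
  have ae : ∀ β ∈ BA d, sp β = S →
      (fun t => (∏ j, ww (β j) (x j) (t j)) * pderivMulti β f (msk β t)) =ᵐ[PP d]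
      (fun t => (∏ j : {j // j ∈ S}, max (x j.1 - emb S β t j) 0) * gS f S (emb S β t)) := by
    rintro β hβ rfl
    filter_upwards [ae_PP d] with t ht
    rw [gS_emb f hβ ht, prod_ww hβ x hx]
  have H : ∀ β ∈ BA d, sp β = S →
      Integrable (fun t => (∏ j : {j // j ∈ S}, max (x j.1 - emb S β t j) 0) * gS f S (emb S β t))
        (PP d) := by
    intro β hβ hS
    refine Integrable.congr (integrable_PP ?_) (ae β hβ hS)
    refine Continuous.mul ?_ ((contDiff_pm hf β).continuous.comp (continuous_msk β))
    exact continuous_finsetProd _ fun j _ => (continuous_ww _ _).comp (continuous_apply j)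
  have hM := hh.mul (measurable_gS hf S)
  have := sInt_wd (measurable_gS hf S) (integrable_gS hf S) _ hh
    (integrable_muS hM H)
  refine this.trans ?_
  refine (integral_muS hM H).trans ?_
  refine Finset.sum_congr rfl fun β hβ => ?_
  rw [Finset.mem_filter] at hβ
  exact (integral_congr_ae (ae β hβ.1 hβ.2)).symm

lemma rep {d : ℕ} {f : (Fin d → ℝ) → ℝ} (hf : ContDiff ℝ (⊤ : ℕ∞) f) (x : Fin d → ℝ)
    (hx : ∀ k, x k ∈ Set.Icc (0 : ℝ) 1) : f x = marsFun (RR hf) x := by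
  have e := expand hf x hx (List.finRange d) (List.nodup_finRange d)
  have hB : BB (List.finRange d) = BA d := by ext β; simp [mem_BB, BA]
  have hz : ∀ β t, zz (List.finRange d) β x t = msk β t := by
    intro β t; ext j; simp [zz, msk]
  rw [hB] at e
  simp only [hz] at e
  rw [e]
  unfold marsFun
  simp_rw [sInt_RR hf x hx]
  rw [← Finset.sum_fiberwise (BA d) sp, ← Finset.add_sum_erase univ _ (mem_univ ∅)]
  have h2 := Finset.add_sum_erase univ (fun S : Finset (Fin d) => if S.Nonempty then
      ∑ β ∈ (BA d).filter (fun β => sp β = S),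
        ∫ t, (∏ j, ww (β j) (x j) (t j)) * pderivMulti β f (msk β t) ∂(PP d) else 0) (mem_univ ∅)
  rw [← h2]
  simp only [Finset.not_nonempty_empty, if_false, zero_add]
  congr 1
  · have : (BA d).filter (fun β => sp β = ∅) = {fun _ => 0} := by
      ext β
      simp only [BA, sp, Finset.mem_filter, Fintype.mem_piFinset, Finset.mem_range,
        Finset.filter_eq_empty_iff, Finset.mem_singleton, funext_iff]
      constructor
      · intro h k; simpa using h.2 (mem_univ k)
      · intro h; simp [h]
    rw [this, Finset.sum_singleton]
    have hm : ∀ t, msk (fun _ => 0) t = (0 : Fin d → ℝ) := by intro t; ext j; simp [msk, cc]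
    have hp : ∀ l : List (Fin d), DD l (fun _ => 0) f = f := by
      intro l
      induction l with
      | nil => rfl
      | cons k l ih => simpa [DD] using ih
    have hp : DD (List.finRange d) (fun _ => 0) f = f := hp _
    simp [hm, ww, hp, RR]
  · refine Finset.sum_congr rfl fun S hS => ?_
    rw [if_pos (Finset.nonempty_iff_ne_empty.2 (Finset.ne_of_mem_erase hS))]
    rfl

lemma mp_restr {d : ℕ} (T : Finset (Fin d)) (inst : Fintype {k // k ∈ T}) :
    MeasurePreserving (fun (t : Fin d → ℝ) (j : {k // k ∈ T}) => t j) (PP d)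
      (volume.restrict (Set.univ.pi fun _ : {k // k ∈ T} => Set.Icc (0 : ℝ) 1)) := by
  have e : volume.restrict (Set.univ.pi fun _ : {k // k ∈ T} => Set.Icc (0 : ℝ) 1) =
      Measure.pi (fun _ => lam) := by
    rw [volume_pi, Measure.restrict_pi_pi]; rfl
  rw [e]
  clear e
  obtain rfl : inst = Subtype.fintype _ := Subsingleton.elim _ _
  have h1 := measurePreserving_piEquivPiSubtypeProd (fun _ : Fin d => lam) (fun k => k ∈ T)
  have := measurePreserving_fst.comp h1
  exact this

lemma int_box {d : ℕ} (T : Finset (Fin d)) (inst : Fintype {k // k ∈ T}) {h : (Fin d → ℝ) → ℝ} (hh : Continuous h) :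
    ∫ t in Set.univ.pi fun _ : {k // k ∈ T} => Set.Icc (0 : ℝ) 1,
      h (fun k => if h : k ∈ T then t ⟨k, h⟩ else 0) =
    ∫ t, h (fun k => if k ∈ T then t k else 0) ∂(PP d) := by
  have hc : Continuous fun (t : {k // k ∈ T} → ℝ) (k : Fin d) => if h : k ∈ T then t ⟨k, h⟩ else 0 := by
    refine continuous_pi fun k => ?_
    by_cases h : k ∈ T
    · simp only [h, dite_true]; fun_prop
    · simp only [h, dite_false]; fun_prop
  have hs : AEStronglyMeasurable (fun (t : {k // k ∈ T} → ℝ) =>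
      h (fun k => if h : k ∈ T then t ⟨k, h⟩ else 0))
      (Measure.map (fun (t : Fin d → ℝ) (j : {k // k ∈ T}) => t j) (PP d)) :=
    (hh.comp hc).aestronglyMeasurable
  rw [← (mp_restr T inst).map_eq, integral_map (mp_restr T inst).measurable.aemeasurable hs]
  simp

lemma tv_RR {d : ℕ} {f : (Fin d → ℝ) → ℝ} (hf : ContDiff ℝ (⊤ : ℕ∞) f) (S : Finset (Fin d)) :
    ((RR hf).ν S).totalVariation
        ({t : {j // j ∈ S} → ℝ | ∀ j, 0 ≤ t j ∧ t j < 1} \ {fun _ => 0}) =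
    ∑ β ∈ (BA d).filter (fun β => sp β = S), if univ.sup β = 2 then
      ENNReal.ofReal (∫ t, |pderivMulti β f (msk β t)| ∂(PP d)) else 0 := by
  have hA := (measurableSet_bx S).diff (measurableSet_singleton (fun _ => (0:ℝ)))
  have := tv_wd (measurable_gS hf S) (integrable_gS hf S) hA
  refine this.trans ?_
  rw [lintegral_muS (Measurable.indicator (by have := measurable_gS hf S; fun_prop) hA)]
  refine Finset.sum_congr rfl fun β hβ => ?_
  rw [Finset.mem_filter] at hβ
  obtain ⟨hβ, rfl⟩ := hβ
  have hb : ∀ k, β k < 3 := by simpa [BA] using hβ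
  have hsup : univ.sup β = 2 ↔ ∃ k, β k = 2 := by
    constructor
    · intro h
      by_contra! hne
      have : univ.sup β ≤ 1 := Finset.sup_le fun k _ => by have := hb k; have := hne k; omega
      omega
    · rintro ⟨k, hk⟩
      refine le_antisymm (Finset.sup_le fun k _ => by have := hb k; omega) ?_
      rw [← hk]; exact Finset.le_sup (mem_univ k)
  split_ifs with h
  · rw [hsup] at h
    obtain ⟨k, hk⟩ := h
    rw [ofReal_integral_eq_lintegral_ofReal
      (f := fun t => |pderivMulti β f (msk β t)|)
      (integrable_PP (((contDiff_pm hf β).continuous.comp (continuous_msk β)).abs))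
      (Filter.Eventually.of_forall fun _ => abs_nonneg _)]
    refine lintegral_congr_ae ?_
    filter_upwards [ae_PP d] with t ht
    rw [Set.indicator_of_mem, gS_emb f hβ ht]
    · refine ⟨emb_mem _ β ht, fun h0 => ?_⟩
      have := congrFun (Set.mem_singleton_iff.1 h0) ⟨k, by simp [sp, hk]⟩
      simp only [emb, cc, hk, if_true] at this
      exact (ht k).1.ne' this
  · rw [hsup] at h
    push Not at h
    rw [← lintegral_zero (μ := PP d)]
    refine lintegral_congr fun t => ?_
    rw [Set.indicator_of_notMem]
    rintro ⟨_, h0⟩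
    apply h0
    rw [Set.mem_singleton_iff]
    ext j
    simp [emb, cc, h]

lemma var_RR {d : ℕ} {f : (Fin d → ℝ) → ℝ} (hf : ContDiff ℝ (⊤ : ℕ∞) f) :
    marsVar (RR hf) = ENNReal.ofReal (∑ β ∈ (BA d).filter (fun β => univ.sup β = 2),
      ∫ t, |pderivMulti β f (msk β t)| ∂(PP d)) := by
  unfold marsVar
  simp_rw [tv_RR hf]
  rw [ENNReal.ofReal_sum_of_nonneg (fun β _ => integral_nonneg fun _ => abs_nonneg _),
    Finset.sum_filter, ← Finset.sum_fiberwise (BA d) sp]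
  refine Finset.sum_congr rfl fun S _ => ?_
  split_ifs with h
  · rfl
  · symm
    refine Finset.sum_eq_zero fun β hβ => ?_
    rw [Finset.mem_filter] at hβ
    rw [Finset.not_nonempty_iff_eq_empty] at h
    have h0 : ∀ k, β k = 0 := by
      have := hβ.2
      rw [h, sp, Finset.filter_eq_empty_iff] at this
      intro k; simpa using this (mem_univ k)
    have : univ.sup β = 0 := by simp [Finset.sup_eq_bot_iff, h0]
    rw [if_neg (by omega)]

/-- Every `C^∞` function on `ℝ^d`, restricted to `[0,1]^d`, admits a
MARS representation whose variation equals
`Σ_{β ∈ {0,1,2}^d, max β = 2} ∫_{T̄^(β)} |f^(β)|` (integrating over the coordinates with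
`β_k = 2`, the others set to `0`). -/
theorem statement16 (d : ℕ) (hd : 1 ≤ d) (f : (Fin d → ℝ) → ℝ)
    (hf : ContDiff ℝ (⊤ : ℕ∞) f) :
    ∃ R : MarsRep d,
      (∀ x : Fin d → ℝ, (∀ k, x k ∈ Set.Icc (0 : ℝ) 1) → f x = marsFun R x) ∧
      marsVar R = ENNReal.ofReal
        (∑ β ∈ (Fintype.piFinset fun _ : Fin d => Finset.range 3).filter
            (fun β => Finset.univ.sup β = 2),
          ∫ t in Set.univ.pi
              fun _ : {k // k ∈ Finset.univ.filter fun k : Fin d => β k = 2} =>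
                Set.Icc (0 : ℝ) 1,
            |pderivMulti β f fun k =>
              if h : k ∈ Finset.univ.filter (fun k : Fin d => β k = 2) then t ⟨k, h⟩
              else 0|) := by
  refine ⟨RR hf, fun x hx => rep hf x hx, ?_⟩
  rw [var_RR hf]
  congr 1
  refine Finset.sum_congr rfl fun β _ => ?_
  have := int_box (Finset.univ.filter fun k : Fin d => β k = 2) (Subtype.fintype _)
    (h := fun y => |pderivMulti β f y|) (contDiff_pm hf β).continuous.abs
  refine Eq.trans ?_ this.symm
  simp only [Finset.mem_filter, Finset.mem_univ, true_and]
  rfl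
end
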